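/- arXiv:1909.05207 — 15 statements merged into one kernel-verified Lean document; each statement's English description precedes it below -/
import Mathlib

section
/- In the binary prediction with expert advice setting with N experts over T rounds, let the Weighted Majority algorithm use parameter ε ∈ (0, 1/2). Denote by M_T the number of rounds in which the algorithm's weighted-majority prediction is wrong, and by M_T(i) the number of rounds in which expert i is wrong. Then for every expert i ∈ {1,...,N}: M_T ≤ 2(1+ε)·M_T(i) + (2 log N)/ε. -/
theorem wm_prod_rec (T : ℕ) (r : ℝ) (p : Fin T → Prop) [DecidablePred p] :
    ∏ t : Fin T, (if p t then r else 1) = r ^ (Finset.univ.filter p).card := by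
  rw [Finset.prod_ite]
  simp

theorem wm_eq (T : ℕ) (a : ℕ → ℝ) (f : Fin T → ℝ) (h0 : a 0 = 1)
    (h : ∀ t : Fin T, a (t.val + 1) = f t * a t.val) : a T = ∏ t, f t := by
  induction T with
  | zero => simpa using h0
  | succ n ih =>
    rw [Fin.prod_univ_castSucc, ← ih (fun t => f t.castSucc) (fun t => h t.castSucc), mul_comm]
    exact h (Fin.last n)

theorem wm_le (T : ℕ) (a : ℕ → ℝ) (f : Fin T → ℝ) (hf : ∀ t, 0 ≤ f t)
    (h : ∀ t : Fin T, a (t.val + 1) ≤ f t * a t.val) : a T ≤ a 0 * ∏ t, f t := by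
  induction T with
  | zero => simp
  | succ n ih =>
    rw [Fin.prod_univ_castSucc]
    have h1 := ih (fun t => f t.castSucc) (fun t => hf _) (fun t => h t.castSucc)
    have h2 := h (Fin.last n)
    have h3 := mul_le_mul_of_nonneg_left h1 (hf (Fin.last n))
    simp only [Fin.val_last] at h2
    linarith

theorem wm_log (x : ℝ) (h0 : 0 < x) (h1 : x < 1 / 2) : -(x + x ^ 2) ≤ Real.log (1 - x) := by
  rw [Real.le_log_iff_exp_le (by linarith), Real.exp_neg]
  have h := Real.quadratic_le_exp_of_nonneg (x := x + x ^ 2) (by positivity)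
  have hp := Real.exp_pos (x + x ^ 2)
  rw [inv_le_iff_one_le_mul₀ hp]
  have h2 := mul_le_mul_of_nonneg_left h (show 0 ≤ 1 - x by linarith)
  have h3 : 0 ≤ 1 - x - x ^ 2 - x ^ 3 := by
    have : x ^ 2 ≤ (1 / 2) ^ 2 := by gcongr
    have : x ^ 3 ≤ (1 / 2) ^ 3 := by gcongr
    linarith
  have h4 := mul_nonneg (sq_nonneg x) h3
  nlinarith

/-- **Weighted Majority mistake bound.** In binary prediction with expert advice with
`N` experts over `T` rounds, the Weighted Majority algorithm with parameter
`ε ∈ (0, 1/2)` makes at most `2(1+ε)·M_T(i) + 2 log N / ε` mistakes, where `M_T(i)`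
is the number of mistakes of expert `i`. -/
theorem weighted_majority_mistake_bound
    (N T : ℕ) (ε : ℝ) (hε : ε ∈ Set.Ioo (0 : ℝ) (1 / 2))
    (pred : Fin T → Fin N → Bool) (outcome : Fin T → Bool)
    (alg : Fin T → Bool)
    (W : ℕ → Fin N → ℝ)
    (hW0 : ∀ i, W 0 i = 1)
    (hWrec : ∀ (t : Fin T) (i : Fin N),
      W (t.val + 1) i = if pred t i = outcome t then W t.val i else W t.val i * (1 - ε))
    (hmaj : ∀ t : Fin T,
      ∑ i ∈ Finset.univ.filter (fun i => pred t i = alg t), W t.val i ≥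
        ∑ i ∈ Finset.univ.filter (fun i => pred t i ≠ alg t), W t.val i)
    (i : Fin N) :
    ((Finset.univ.filter (fun t : Fin T => alg t ≠ outcome t)).card : ℝ) ≤
      2 * (1 + ε) * ((Finset.univ.filter (fun t : Fin T => pred t i ≠ outcome t)).card : ℝ)
        + 2 * Real.log N / ε := by
  obtain ⟨he0, he1⟩ := hε
  have hpos : ∀ n, n ≤ T → ∀ j, 0 < W n j := by
    intro n
    induction n with
    | zero => intro _ j; rw [hW0]; norm_num
    | succ n ih =>
      intro hn j
      have h1 := ih (by omega) j
      have h2 := hWrec ⟨n, by omega⟩ j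
      simp only at h2
      rw [h2]
      split_ifs
      · exact h1
      · exact mul_pos h1 (by linarith)
  have hWi := wm_eq T (fun n => W n i) (fun t => if pred t i ≠ outcome t then 1 - ε else 1)
    (hW0 i) (by
      intro t
      have := hWrec t i
      simp only [this]
      split_ifs <;> simp_all [mul_comm])
  have hS := wm_le T (fun n => ∑ j, W n j)
    (fun t => if alg t ≠ outcome t then 1 - ε / 2 else 1)
    (by intro t; split_ifs <;> linarith) (by
      intro t
      have e : ∀ j, W (t.val + 1) j
          = W t.val j - ε * (if pred t j ≠ outcome t then W t.val j else 0) := by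
        intro j
        rw [hWrec t j]
        by_cases h : pred t j = outcome t <;> simp [h]
        ring
      rw [Finset.sum_congr rfl (fun j _ => e j), Finset.sum_sub_distrib, ← Finset.mul_sum,
        ← Finset.sum_filter]
      have hnn : 0 ≤ ∑ j ∈ Finset.univ.filter (fun j => pred t j ≠ outcome t), W t.val j :=
        Finset.sum_nonneg (fun j _ => (hpos _ t.isLt.le j).le)
      split_ifs with h
      · have hm := hmaj t
        have hsum := Finset.sum_filter_add_sum_filter_not Finset.univ
          (fun j => pred t j = alg t) (fun j => W t.val j)
        have hfe : Finset.univ.filter (fun j => pred t j ≠ outcome t)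
            = Finset.univ.filter (fun j => pred t j = alg t) := by
          ext j
          simp only [Finset.mem_filter, Finset.mem_univ, true_and]
          revert h
          cases pred t j <;> cases outcome t <;> cases alg t <;> simp
        rw [hfe]
        simp only [ne_eq] at hm
        nlinarith
      · nlinarith)
  rw [wm_prod_rec] at hWi hS
  have hle : W T i ≤ ∑ j, W T j :=
    Finset.single_le_sum (f := fun j => W T j) (fun j _ => (hpos T le_rfl j).le)
      (Finset.mem_univ i)
  simp only [hW0, Finset.sum_const, Finset.card_univ, Fintype.card_fin, nsmul_eq_mul,
    mul_one] at hS
  rw [hWi] at hle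
  have hle2 := hle.trans hS
  have hN : (0 : ℝ) < N := by exact_mod_cast i.pos
  generalize (Finset.univ.filter (fun t : Fin T => alg t ≠ outcome t)).card = M at *
  generalize (Finset.univ.filter (fun t : Fin T => pred t i ≠ outcome t)).card = m at *
  have ha : 0 < 1 - ε := by linarith
  have hb : 0 < 1 - ε / 2 := by linarith
  have hl := Real.log_le_log (by positivity) hle2
  rw [Real.log_mul hN.ne' (by positivity), Real.log_pow, Real.log_pow] at hl
  have h1 := wm_log ε he0 he1
  have h2 := Real.log_le_sub_one_of_pos hb
  have h3 := mul_le_mul_of_nonneg_left h1 (Nat.cast_nonneg (α := ℝ) m)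
  have h4 := mul_le_mul_of_nonneg_left h2 (Nat.cast_nonneg (α := ℝ) M)
  rw [← sub_le_iff_le_add', le_div_iff₀ he0]
  nlinarith
end

section
/- In the binary prediction with expert advice setting with N experts over T rounds, let the Randomized Weighted Majority algorithm use parameter ε ∈ (0, 1/2). Let m_t(i) ∈ {0,1} indicate that expert i is wrong at round t, let M_T(i) = Σ_{t=1}^T m_t(i), and let the expected number of algorithm mistakes be E[M_T] = Σ_{t=1}^T Σ_{i=1}^N p_t(i) m_t(i), where p_t(i) = W_t(i)/Σ_{j=1}^N W_t(j). Then for every expert i ∈ {1,...,N}: E[M_T] ≤ (1+ε)·M_T(i) + (log N)/ε. -/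
lemma rwm_log_aux (ε : ℝ) (h0 : 0 < ε) (h1 : ε < 1 / 2) :
    -(ε * (1 + ε)) ≤ Real.log (1 - ε) := by
  rw [Real.le_log_iff_exp_le (by linarith), Real.exp_neg]
  have hq := Real.quadratic_le_exp_of_nonneg (x := ε * (1 + ε)) (by positivity)
  rw [inv_le_comm₀ (Real.exp_pos _) (by linarith)]
  refine le_trans ?_ hq
  rw [inv_le_iff_one_le_mul₀ (by linarith)]
  have h3 : 0 ≤ 1 - ε - ε ^ 2 - ε ^ 3 := by
    have : ε ^ 2 ≤ 1 / 4 := by nlinarith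
    have : ε ^ 3 ≤ 1 / 8 := by nlinarith
    linarith
  have h4 : 0 ≤ ε ^ 2 * (1 - ε - ε ^ 2 - ε ^ 3) := by positivity
  nlinarith

lemma rwm_main_aux (N : ℕ) (ε : ℝ) (h0 : 0 < ε) (h1 : ε < 1 / 2)
    (W : ℕ → Fin N → ℝ) (hW0 : ∀ i, W 0 i = 1) (i : Fin N) (T : ℕ) :
    ∀ (m : Fin T → Fin N → ℝ), (∀ t i, m t i = 0 ∨ m t i = 1) →
    (∀ (t : Fin T) (i : Fin N), W (t.val + 1) i = W t.val i * (1 - ε * m t i)) →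
    (∀ j, 0 < W T j) ∧
    Real.log (∑ k, W T k) ≤ Real.log N -
      ε * ∑ t : Fin T, ∑ j : Fin N, (W t.val j / ∑ k : Fin N, W t.val k) * m t j ∧
    -(ε * (1 + ε)) * ∑ t : Fin T, m t i ≤ Real.log (W T i) := by
  induction T with
  | zero => intro m _ _; simp [hW0]
  | succ T ih =>
    intro m hm hrec
    obtain ⟨hp, hS, hi⟩ := ih (fun t => m t.castSucc) (fun t j => hm _ j)
      (fun t j => by simpa using hrec t.castSucc j)
    have hr : ∀ j, W (T + 1) j = W T j * (1 - ε * m (Fin.last T) j) := fun j => by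
      simpa using hrec (Fin.last T) j
    have hf : ∀ j, 0 < 1 - ε * m (Fin.last T) j := fun j => by
      rcases hm (Fin.last T) j with h | h <;> rw [h] <;> linarith
    have hp' : ∀ j, 0 < W (T + 1) j := fun j => by
      rw [hr]; exact mul_pos (hp j) (hf j)
    have hpos : 0 < ∑ k, W T k := Finset.sum_pos (fun j _ => hp j) ⟨i, Finset.mem_univ i⟩
    have hpos' : 0 < ∑ k, W (T + 1) k :=
      Finset.sum_pos (fun j _ => hp' j) ⟨i, Finset.mem_univ i⟩
    refine ⟨hp', ?_, ?_⟩
    · rw [Fin.sum_univ_castSucc]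
      simp only [Fin.val_castSucc, Fin.val_last]
      set A := ∑ j : Fin N, (W T j / ∑ k : Fin N, W T k) * m (Fin.last T) j with hA
      have hA' : (∑ k, W T k) * A = ∑ j, W T j * m (Fin.last T) j := by
        rw [hA, Finset.mul_sum]
        refine Finset.sum_congr rfl fun j _ => ?_
        field_simp
      have hsum : ∑ k, W (T + 1) k = (∑ k, W T k) * (1 - ε * A) := by
        have : (∑ k, W T k) * (1 - ε * A) = ∑ k, W T k - ε * ((∑ k, W T k) * A) := by ring
        rw [this, hA', Finset.mul_sum, ← Finset.sum_sub_distrib]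
        refine Finset.sum_congr rfl fun j _ => ?_
        rw [hr]; ring
      have hApos : 0 < 1 - ε * A := by
        rw [hsum] at hpos'
        exact (mul_pos_iff_of_pos_left hpos).1 hpos'
      rw [hsum, Real.log_mul hpos.ne' hApos.ne']
      have := Real.log_le_sub_one_of_pos hApos
      linarith
    · rw [Fin.sum_univ_castSucc, hr, Real.log_mul (hp i).ne' (hf i).ne']
      have : -(ε * (1 + ε)) * m (Fin.last T) i ≤ Real.log (1 - ε * m (Fin.last T) i) := by
        rcases hm (Fin.last T) i with h | h <;> rw [h]
        · simp
        · simpa using rwm_log_aux ε h0 h1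
      linarith

/-- **Randomized Weighted Majority bound.** The expected number of mistakes of the
Randomized Weighted Majority algorithm with parameter `ε ∈ (0, 1/2)` is at most
`(1+ε)·M_T(i) + log N / ε` for every expert `i`. -/
theorem randomized_weighted_majority_bound
    (N T : ℕ) (ε : ℝ) (hε : ε ∈ Set.Ioo (0 : ℝ) (1 / 2))
    (m : Fin T → Fin N → ℝ) (hm : ∀ t i, m t i = 0 ∨ m t i = 1)
    (W : ℕ → Fin N → ℝ)
    (hW0 : ∀ i, W 0 i = 1)
    (hWrec : ∀ (t : Fin T) (i : Fin N), W (t.val + 1) i = W t.val i * (1 - ε * m t i))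
    (i : Fin N) :
    ∑ t : Fin T, ∑ j : Fin N, (W t.val j / ∑ k : Fin N, W t.val k) * m t j ≤
      (1 + ε) * ∑ t : Fin T, m t i + Real.log N / ε := by
  obtain ⟨h0, h1⟩ := hε
  obtain ⟨hp, hS, hi⟩ := rwm_main_aux N ε h0 h1 W hW0 i T m hm hWrec
  have hle : Real.log (W T i) ≤ Real.log (∑ k, W T k) :=
    Real.log_le_log (hp i)
      (Finset.single_le_sum (fun j _ => (hp j).le) (Finset.mem_univ i))
  refine le_of_mul_le_mul_left ?_ h0
  have : ε * ((1 + ε) * ∑ t : Fin T, m t i + Real.log N / ε) =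
      ε * (1 + ε) * ∑ t : Fin T, m t i + Real.log N := by field_simp
  rw [this]
  linarith
end

section
/- Let ε > 0 and let ℓ_1,...,ℓ_T ∈ ℝ^N be loss vectors with all entries non-negative. Define weights W_1(i) = 1 and W_{t+1}(i) = W_t(i)·e^{−ε ℓ_t(i)}, and distributions x_t(i) = W_t(i)/Σ_{j=1}^N W_t(j). Then the Hedge algorithm satisfies, for every i* ∈ {1,...,N}: Σ_{t=1}^T ⟨x_t, ℓ_t⟩ ≤ Σ_{t=1}^T ℓ_t(i*) + ε Σ_{t=1}^T ⟨x_t, ℓ_t²⟩ + (log N)/ε, where ℓ_t² denotes the vector with entries ℓ_t(i)². -/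
theorem hedge_exp_aux (y : ℝ) (hy : 0 ≤ y) : Real.exp (-y) ≤ 1 - y + y ^ 2 := by
  have h1 := Real.add_one_le_exp y
  have h2 : Real.exp (-y) * Real.exp y = 1 := by rw [← Real.exp_add]; simp
  have h3 := Real.exp_pos (-y)
  have h4 : Real.exp (-y) * (y + 1) ≤ 1 := by
    exact (mul_le_mul_of_nonneg_left h1 h3.le).trans h2.le
  have h5 : Real.exp (-y) * (y + 1) ≤ (1 - y + y ^ 2) * (y + 1) := by
    have : 0 ≤ y ^ 3 := by positivity
    nlinarith
  exact le_of_mul_le_mul_right h5 (by linarith)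

theorem hedge_aux (N : ℕ) (ε : ℝ) (hε : 0 < ε) (W : ℕ → Fin N → ℝ)
    (hW0 : ∀ i, W 0 i = 1) (istar : Fin N) (T : ℕ) :
    ∀ (ℓ : Fin T → Fin N → ℝ) (_ : ∀ t i, 0 ≤ ℓ t i)
    (_ : ∀ (t : Fin T) (i : Fin N),
      W (t.val + 1) i = W t.val i * Real.exp (-ε * ℓ t i))
    (x : Fin T → Fin N → ℝ)
    (_ : ∀ (t : Fin T) (i : Fin N), x t i = W t.val i / ∑ j : Fin N, W t.val j),
    (∀ i, 0 < W T i) ∧ W T istar = Real.exp (-ε * ∑ t : Fin T, ℓ t istar) ∧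
    Real.log (∑ j, W T j) ≤ Real.log N - ε * (∑ t : Fin T, ∑ i : Fin N, x t i * ℓ t i)
      + ε ^ 2 * ∑ t : Fin T, ∑ i : Fin N, x t i * (ℓ t i) ^ 2 := by
  induction T with
  | zero => intro ℓ _ _ x _; simp [hW0]
  | succ T ih =>
    intro ℓ hℓ hW x hx
    obtain ⟨hp, hs, hl⟩ := ih (fun t => ℓ t.castSucc) (fun t i => hℓ _ i)
      (fun t i => hW t.castSucc i) (fun t => x t.castSucc) (fun t i => hx t.castSucc i)
    have hW' : ∀ i, W (T + 1) i = W T i * Real.exp (-ε * ℓ (Fin.last T) i) :=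
      fun i => hW (Fin.last T) i
    have hx' : ∀ i, x (Fin.last T) i = W T i / ∑ j, W T j := fun i => hx (Fin.last T) i
    have hp' : ∀ i, 0 < W (T + 1) i := fun i => by
      rw [hW']; exact mul_pos (hp i) (Real.exp_pos _)
    refine ⟨hp', ?_, ?_⟩
    · rw [hW', hs, ← Real.exp_add, Fin.sum_univ_castSucc]
      congr 1; ring
    · have hS : 0 < ∑ j, W T j := Finset.sum_pos (fun i _ => hp i) ⟨istar, Finset.mem_univ _⟩
      have hS' : 0 < ∑ j, W (T + 1) j :=
        Finset.sum_pos (fun i _ => hp' i) ⟨istar, Finset.mem_univ _⟩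
      have hx1 : ∑ i, x (Fin.last T) i = 1 := by
        simp_rw [hx']; rw [← Finset.sum_div]; exact div_self hS.ne'
      have hr : (∑ j, W (T + 1) j) / (∑ j, W T j) ≤
          1 - ε * (∑ i, x (Fin.last T) i * ℓ (Fin.last T) i)
            + ε ^ 2 * ∑ i, x (Fin.last T) i * ℓ (Fin.last T) i ^ 2 := by
        rw [← hx1, Finset.sum_div, Finset.mul_sum, Finset.mul_sum, ← Finset.sum_sub_distrib,
          ← Finset.sum_add_distrib]
        refine Finset.sum_le_sum fun i _ => ?_
        have hxp : 0 ≤ x (Fin.last T) i := by rw [hx']; exact (div_pos (hp i) hS).le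
        have he := hedge_exp_aux (ε * ℓ (Fin.last T) i) (mul_nonneg hε.le (hℓ _ i))
        have e1 : W (T + 1) i / (∑ j, W T j)
            = x (Fin.last T) i * Real.exp (-(ε * ℓ (Fin.last T) i)) := by
          rw [hW', hx', neg_mul]; ring
        rw [e1]
        refine (mul_le_mul_of_nonneg_left he hxp).trans (le_of_eq ?_)
        ring
      have hlog := Real.log_le_sub_one_of_pos (div_pos hS' hS)
      rw [Real.log_div hS'.ne' hS.ne'] at hlog
      rw [Fin.sum_univ_castSucc, Fin.sum_univ_castSucc, mul_add, mul_add]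
      linarith

/-- **Hedge regret bound.** For nonnegative loss vectors `ℓ_1,...,ℓ_T ∈ ℝ^N` and
`ε > 0`, the Hedge algorithm (multiplicative weights with factor `e^{-ε ℓ_t(i)}`)
satisfies `Σ_t ⟨x_t, ℓ_t⟩ ≤ Σ_t ℓ_t(i*) + ε Σ_t ⟨x_t, ℓ_t²⟩ + log N / ε`. -/
theorem hedge_regret_bound
    (N T : ℕ) (ε : ℝ) (hε : 0 < ε)
    (ℓ : Fin T → Fin N → ℝ) (hℓ : ∀ t i, 0 ≤ ℓ t i)
    (W : ℕ → Fin N → ℝ)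
    (hW0 : ∀ i, W 0 i = 1)
    (hWrec : ∀ (t : Fin T) (i : Fin N),
      W (t.val + 1) i = W t.val i * Real.exp (-ε * ℓ t i))
    (x : Fin T → Fin N → ℝ)
    (hx : ∀ (t : Fin T) (i : Fin N), x t i = W t.val i / ∑ j : Fin N, W t.val j)
    (istar : Fin N) :
    ∑ t : Fin T, ∑ i : Fin N, x t i * ℓ t i ≤
      ∑ t : Fin T, ℓ t istar + ε * ∑ t : Fin T, ∑ i : Fin N, x t i * (ℓ t i) ^ 2
        + Real.log N / ε := by
  obtain ⟨hp, hs, hl⟩ := hedge_aux N ε hε W hW0 istar T ℓ hℓ hWrec x hx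
  have h1 : W T istar ≤ ∑ j, W T j :=
    Finset.single_le_sum (fun i _ => (hp i).le) (Finset.mem_univ istar)
  have h2 := Real.log_le_log (hp istar) h1
  rw [hs, Real.log_exp] at h2
  refine le_of_mul_le_mul_left ?_ hε
  have h3 : ε * (Real.log N / ε) = Real.log N := by field_simp
  rw [mul_add, mul_add, h3]
  nlinarith
end

section
/- Let f : ℝ^d → ℝ be α-strongly convex and β-smooth, let x* be a global minimizer of f, and set γ = α/β. Let the gradient descent iterates be defined by x_{t+1} = x_t − (1/β)∇f(x_t), starting from any x_1 ∈ ℝ^d, and let h_t = f(x_t) − f(x*). Then for all t ≥ 1: h_{t+1} ≤ h_1 · e^{−γ t}. -/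
open scoped RealInnerProductSpace

/-- **Linear convergence of unconstrained gradient descent** for `α`-strongly convex
and `β`-smooth functions with step size `1/β`: `h_{t+1} ≤ h_1 · e^{-(α/β) t}`. -/
theorem gd_unconstrained_linear_convergence
    {d : ℕ} (f : EuclideanSpace ℝ (Fin d) → ℝ)
    (f' : EuclideanSpace ℝ (Fin d) → EuclideanSpace ℝ (Fin d))
    (hf' : ∀ x, HasGradientAt f (f' x) x)
    (α β : ℝ) (hα : 0 < α) (hαβ : α ≤ β)
    (hstrong : ∀ x y, f x + ⟪f' x, y - x⟫ + α / 2 * ‖y - x‖ ^ 2 ≤ f y)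
    (hsmooth : ∀ x y, f y ≤ f x + ⟪f' x, y - x⟫ + β / 2 * ‖y - x‖ ^ 2)
    (xstar : EuclideanSpace ℝ (Fin d)) (hmin : ∀ y, f xstar ≤ f y)
    (x : ℕ → EuclideanSpace ℝ (Fin d))
    (hrec : ∀ t, x (t + 1) = x t - (1 / β) • f' (x t)) :
    ∀ t : ℕ, 1 ≤ t →
      f (x (t + 1)) - f xstar ≤ (f (x 1) - f xstar) * Real.exp (-(α / β) * t) := by
  have hβ : 0 < β := lt_of_lt_of_le hα hαβ
  have step : ∀ t, f (x (t + 1)) - f xstar ≤ (f (x t) - f xstar) * Real.exp (-(α / β)) := by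
    intro t
    have h1 := hsmooth (x t) (x (t + 1))
    have e : x (t + 1) - x t = -((1 / β) • f' (x t)) := by rw [hrec t]; abel
    rw [e, norm_neg, inner_neg_right, real_inner_smul_right, real_inner_self_eq_norm_sq,
      norm_smul, mul_pow, Real.norm_eq_abs, sq_abs] at h1
    have h2 := hstrong (x t) xstar
    have h3 : 0 ≤ ‖f' (x t) + α • (xstar - x t)‖ ^ 2 := sq_nonneg _
    rw [norm_add_sq_real, real_inner_smul_right, norm_smul, mul_pow, Real.norm_eq_abs,
      sq_abs] at h3
    have h0 := hmin (x t)
    generalize ‖f' (x t)‖ ^ 2 = G at *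
    generalize ‖xstar - x t‖ ^ 2 = V at *
    generalize ⟪f' (x t), xstar - x t⟫ = I at *
    have h4 : 2 * α * (f (x t) - f xstar) ≤ G := by
      have := mul_le_mul_of_nonneg_left h2 hα.le
      nlinarith
    have h5 : β / 2 * ((1 / β) ^ 2 * G) = G / (2 * β) := by field_simp
    have h6 : 1 / β * G = 2 * (G / (2 * β)) := by field_simp
    have h7 : α / β * (f (x t) - f xstar) ≤ G / (2 * β) := by
      rw [le_div_iff₀ (by positivity)]
      have : α / β * (f (x t) - f xstar) * (2 * β) = 2 * α * (f (x t) - f xstar) := by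
        field_simp
      rw [this]; exact h4
    have h8 := Real.add_one_le_exp (-(α / β))
    have h9 := mul_le_mul_of_nonneg_left h8 (sub_nonneg.2 h0)
    linarith
  intro t _
  induction t with
  | zero => simp
  | succ n ih =>
    have ih' : f (x (n + 1)) - f xstar ≤ (f (x 1) - f xstar) * Real.exp (-(α / β) * n) := by
      rcases Nat.eq_zero_or_pos n with h | h
      · subst h; simp
      · exact ih h
    have e : -(α / β) * ((n + 1 : ℕ) : ℝ) = -(α / β) * n + -(α / β) := by push_cast; ring
    rw [e, Real.exp_add, ← mul_assoc]
    exact (step (n + 1)).trans (mul_le_mul_of_nonneg_right ih' (Real.exp_pos _).le)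
end

section
/- Let K ⊆ ℝ^d be a compact convex set, let f : ℝ^d → ℝ be α-strongly convex and β-smooth on K, let x* be a minimizer of f over K, and set γ = α/β. Let the projected gradient descent iterates be defined by x_{t+1} = Π_K(x_t − (1/β)∇f(x_t)), starting from any x_1 ∈ K, and let h_t = f(x_t) − f(x*). Then for all t ≥ 1: h_{t+1} ≤ h_1 · e^{−γ t / 4}. -/
open scoped RealInnerProductSpace

/-- **Linear convergence of projected gradient descent** over a compact convex set
for `α`-strongly convex, `β`-smooth functions with step size `1/β`:
`h_{t+1} ≤ h_1 · e^{-(α/β) t / 4}`. -/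
theorem projected_gd_linear_convergence
    {d : ℕ} (K : Set (EuclideanSpace ℝ (Fin d)))
    (hKcomp : IsCompact K) (hKconv : Convex ℝ K)
    (proj : EuclideanSpace ℝ (Fin d) → EuclideanSpace ℝ (Fin d))
    (hproj : ∀ y, proj y ∈ K ∧ ∀ z ∈ K, ‖proj y - y‖ ≤ ‖z - y‖)
    (f : EuclideanSpace ℝ (Fin d) → ℝ)
    (f' : EuclideanSpace ℝ (Fin d) → EuclideanSpace ℝ (Fin d))
    (hf' : ∀ x ∈ K, HasGradientAt f (f' x) x)
    (α β : ℝ) (hα : 0 < α) (hαβ : α ≤ β)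
    (hstrong : ∀ x ∈ K, ∀ y ∈ K, f x + ⟪f' x, y - x⟫ + α / 2 * ‖y - x‖ ^ 2 ≤ f y)
    (hsmooth : ∀ x ∈ K, ∀ y ∈ K, f y ≤ f x + ⟪f' x, y - x⟫ + β / 2 * ‖y - x‖ ^ 2)
    (xstar : EuclideanSpace ℝ (Fin d)) (hxstar : xstar ∈ K)
    (hmin : ∀ y ∈ K, f xstar ≤ f y)
    (x : ℕ → EuclideanSpace ℝ (Fin d)) (hx1 : x 1 ∈ K)
    (hrec : ∀ t, 1 ≤ t → x (t + 1) = proj (x t - (1 / β) • f' (x t))) :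
    ∀ t : ℕ, 1 ≤ t →
      f (x (t + 1)) - f xstar ≤ (f (x 1) - f xstar) * Real.exp (-(α / β) * t / 4) := by
  have hβ : 0 < β := lt_of_lt_of_le hα hαβ
  have hγ0 : 0 < α / β := div_pos hα hβ
  have hγ1 : α / β ≤ 1 := (div_le_one hβ).2 hαβ
  have step : ∀ y ∈ K, f (proj (y - (1 / β) • f' y)) - f xstar
      ≤ (1 - α / β) * (f y - f xstar) := by
    intro y hy
    obtain ⟨hpK, hp⟩ := hproj (y - (1 / β) • f' y)
    set p := proj (y - (1 / β) • f' y) with hpdef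
    have hz : y + (α / β) • (xstar - y) ∈ K :=
      hKconv.add_smul_sub_mem hy hxstar ⟨hγ0.le, hγ1⟩
    have h1 := hp _ hz
    have h2 : ‖p - (y - (1 / β) • f' y)‖ ^ 2
        ≤ ‖y + (α / β) • (xstar - y) - (y - (1 / β) • f' y)‖ ^ 2 :=
      pow_le_pow_left₀ (norm_nonneg _) h1 2
    have e1 : p - (y - (1 / β) • f' y) = (p - y) + (1 / β) • f' y := by abel
    have e2 : y + (α / β) • (xstar - y) - (y - (1 / β) • f' y)
        = (α / β) • (xstar - y) + (1 / β) • f' y := by abel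
    rw [e1, e2, norm_add_sq_real, norm_add_sq_real] at h2
    simp only [real_inner_smul_left, real_inner_smul_right, norm_smul, mul_pow,
      Real.norm_eq_abs, sq_abs] at h2
    rw [real_inner_comm, real_inner_comm (f' y) (xstar - y)] at h2
    have hs := hsmooth y hy p hpK
    have hc := hstrong y hy xstar hxstar
    generalize ⟪f' y, p - y⟫ = a at *
    generalize ⟪f' y, xstar - y⟫ = b at *
    generalize ‖p - y‖ ^ 2 = P at *
    generalize ‖xstar - y‖ ^ 2 = D at *
    obtain ⟨γ, hγ⟩ : ∃ γ, γ = α / β := ⟨_, rfl⟩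
    have hαγ : α = γ * β := by rw [hγ]; field_simp
    rw [← hγ] at h2 hγ0 ⊢
    have h3 : a + β / 2 * P ≤ γ * b + β / 2 * (γ ^ 2 * D) := by
      have h4 : P + 2 * (1 / β * a) ≤ γ ^ 2 * D + 2 * (γ * (1 / β * b)) := by linarith
      have h5 := mul_le_mul_of_nonneg_left h4 (half_pos hβ).le
      have e3 : β / 2 * (P + 2 * (1 / β * a)) = a + β / 2 * P := by field_simp; ring
      have e4 : β / 2 * (γ ^ 2 * D + 2 * (γ * (1 / β * b)))
          = γ * b + β / 2 * (γ ^ 2 * D) := by field_simp; ring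
      linarith
    have h6 := mul_le_mul_of_nonneg_left hc hγ0.le
    rw [hαγ] at h6
    linarith
  have key : ∀ n : ℕ, x (n + 1) ∈ K ∧
      f (x (n + 1)) - f xstar ≤ (f (x 1) - f xstar) * Real.exp (-(α / β) * n / 4) := by
    intro n
    induction n with
    | zero => exact ⟨hx1, by simp⟩
    | succ n ih =>
      obtain ⟨hK, hh⟩ := ih
      have hr := hrec (n + 1) (by omega)
      refine ⟨by rw [hr]; exact (hproj _).1, ?_⟩
      have hst := step _ hK
      rw [← hr] at hst
      have h0 : 0 ≤ f (x (n + 1)) - f xstar := sub_nonneg.2 (hmin _ hK)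
      have hexp : 1 - α / β ≤ Real.exp (-(α / β) / 4) := by
        have := Real.add_one_le_exp (-(α / β) / 4)
        linarith
      calc f (x (n + 1 + 1)) - f xstar ≤ (1 - α / β) * (f (x (n + 1)) - f xstar) := hst
        _ ≤ Real.exp (-(α / β) / 4) * (f (x (n + 1)) - f xstar) :=
          mul_le_mul_of_nonneg_right hexp h0
        _ ≤ Real.exp (-(α / β) / 4) *
            ((f (x 1) - f xstar) * Real.exp (-(α / β) * n / 4)) :=
          mul_le_mul_of_nonneg_left hh (Real.exp_pos _).le
        _ = (f (x 1) - f xstar) * Real.exp (-(α / β) * ((n + 1 : ℕ) : ℝ) / 4) := by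
          rw [mul_left_comm, ← Real.exp_add]
          congr 2
          push_cast
          ring
  intro t _
  exact (key t).2
end

section
/- Let f : ℝ^d → ℝ be G-Lipschitz continuous, let δ > 0, and define the smoothed function f̂_δ(x) = E_{v ~ Unif(B)}[f(x + δv)], where B is the unit Euclidean ball in ℝ^d. Then: (1) if f is α-strongly convex, so is f̂_δ; (2) f̂_δ is differentiable and (dG/δ)-smooth, i.e., ‖∇f̂_δ(x) − ∇f̂_δ(y)‖ ≤ (dG/δ)‖x − y‖ for all x, y; (3) |f̂_δ(x) − f(x)| ≤ δG for all x ∈ ℝ^d. -/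
open MeasureTheory

lemma ball_inter {d : ℕ} (h : EuclideanSpace ℝ (Fin d)) :
    (1 - d * ‖h‖ / 2) * volume.real (Metric.closedBall (0 : EuclideanSpace ℝ (Fin d)) 1) ≤
    volume.real (Metric.closedBall (0 : EuclideanSpace ℝ (Fin d)) 1 ∩ Metric.closedBall h 1) := by
  by_cases h2 : ‖h‖ ≤ 2
  · have hs : Metric.closedBall ((1/2 : ℝ) • h) (1 - ‖h‖/2) ⊆
        Metric.closedBall (0 : EuclideanSpace ℝ (Fin d)) 1 ∩ Metric.closedBall h 1 := by
      apply Set.subset_inter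
      · apply Metric.closedBall_subset_closedBall'
        rw [dist_eq_norm, sub_zero, norm_smul]; norm_num; linarith
      · apply Metric.closedBall_subset_closedBall'
        have : (1/2 : ℝ) • h - h = (-(1/2 : ℝ)) • h := by module
        rw [dist_eq_norm, this, norm_smul]; norm_num; linarith
    refine le_trans ?_ (measureReal_mono hs
      (measure_ne_top_of_subset Set.inter_subset_left measure_closedBall_lt_top.ne))
    rw [Measure.addHaar_real_closedBall _ _ (by norm_num : (0:ℝ) ≤ 1),
      Measure.addHaar_real_closedBall _ _ (by linarith)]
    simp only [finrank_euclideanSpace, Fintype.card_fin, one_pow, one_mul]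
    gcongr
    have := one_add_mul_le_pow (a := -(‖h‖/2)) (by linarith) d
    calc _ = 1 + (d:ℝ) * -(‖h‖/2) := by ring
      _ ≤ _ := this
      _ = _ := by ring
  · push Not at h2
    refine le_trans ?_ measureReal_nonneg
    apply mul_nonpos_of_nonpos_of_nonneg _ measureReal_nonneg
    rcases Nat.eq_zero_or_pos d with rfl | hd
    · have : h = 0 := Subsingleton.elim _ _
      rw [this] at h2; norm_num at h2
    · have : (1:ℝ) ≤ d := by exact_mod_cast hd
      nlinarith

lemma diff_bound {d : ℕ} {F : Type*} [NormedAddCommGroup F] [NormedSpace ℝ F]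
    (φ : EuclideanSpace ℝ (Fin d) → F) (G : ℝ) (hG : 0 < G)
    (hm : AEStronglyMeasurable φ volume) (hb : ∀ v, ‖φ v‖ ≤ G) (h : EuclideanSpace ℝ (Fin d)) :
    ‖(∫ v in Metric.closedBall (0 : EuclideanSpace ℝ (Fin d)) 1, φ v) -
      ∫ v in Metric.closedBall (0 : EuclideanSpace ℝ (Fin d)) 1, φ (v + h)‖ ≤
    G * d * ‖h‖ * volume.real (Metric.closedBall (0 : EuclideanSpace ℝ (Fin d)) 1) := by
  set K := Metric.closedBall (0 : EuclideanSpace ℝ (Fin d)) 1 with hK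
  set K' := Metric.closedBall h 1 with hK'
  have e1 : ∫ v in K, φ (v + h) = ∫ v in K', φ v := by
    have : K = (fun v => v + h) ⁻¹' K' := by
      ext v; simp [hK, hK', dist_eq_norm]
    rw [this]
    exact (measurePreserving_add_right volume h).setIntegral_preimage_emb
      (MeasurableEquiv.addRight h).measurableEmbedding φ K'
  have mK : MeasurableSet K := measurableSet_closedBall
  have mK' : MeasurableSet K' := measurableSet_closedBall
  have fK : volume K < ⊤ := measure_closedBall_lt_top
  have fK' : volume K' < ⊤ := measure_closedBall_lt_top
  have int : ∀ S, volume S < ⊤ → IntegrableOn φ S volume := fun S hS =>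
    IntegrableOn.of_bound hS hm.restrict G (Filter.Eventually.of_forall hb)
  have i1 := integral_inter_add_sdiff mK' (int K fK)
  have i2 := integral_inter_add_sdiff mK (int K' fK')
  have r1 := measureReal_inter_add_sdiff (s := K) mK' (h := fK.ne)
  have r2 := measureReal_inter_add_sdiff (s := K') mK (h := fK'.ne)
  have eqv : volume.real K' = volume.real K := by
    rw [hK, hK', Measure.addHaar_real_closedBall _ _ (by norm_num : (0:ℝ) ≤ 1),
      Measure.addHaar_real_closedBall _ _ (by norm_num : (0:ℝ) ≤ 1)]
  have b1 := norm_setIntegral_le_of_norm_le_const (f := φ) (C := G) (μ := volume) (s := K \ K')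
    ((measure_mono Set.diff_subset).trans_lt fK) (fun v _ => hb v)
  have b2 := norm_setIntegral_le_of_norm_le_const (f := φ) (C := G) (μ := volume) (s := K' \ K)
    ((measure_mono Set.diff_subset).trans_lt fK') (fun v _ => hb v)
  have bi := ball_inter h
  rw [← hK, ← hK'] at bi
  rw [Set.inter_comm] at i2 r2
  rw [e1, ← i1, ← i2, add_sub_add_left_eq_sub]
  refine (norm_sub_le _ _).trans ((add_le_add b1 b2).trans ?_)
  have : volume.real (K \ K') + volume.real (K' \ K) ≤ d * ‖h‖ * volume.real K := by linarith
  calc _ = G * (volume.real (K \ K') + volume.real (K' \ K)) := by ring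
    _ ≤ G * (d * ‖h‖ * volume.real K) := by gcongr
    _ = _ := by ring

/-- **Smoothing lemma.** -/
theorem smoothing_lemma
    {d : ℕ} (G δ : ℝ) (hG : 0 < G) (hδ : 0 < δ)
    (f : EuclideanSpace ℝ (Fin d) → ℝ)
    (hf : ∀ x y, |f x - f y| ≤ G * ‖x - y‖)
    (fhat : EuclideanSpace ℝ (Fin d) → ℝ)
    (hfhat : ∀ x, fhat x =
      ∫ v, f (x + δ • v)
        ∂((volume (Metric.closedBall (0 : EuclideanSpace ℝ (Fin d)) 1))⁻¹ •
            volume.restrict (Metric.closedBall (0 : EuclideanSpace ℝ (Fin d)) 1))) :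
    (∀ α : ℝ, StrongConvexOn Set.univ α f → StrongConvexOn Set.univ α fhat) ∧
    (∃ g : EuclideanSpace ℝ (Fin d) → EuclideanSpace ℝ (Fin d),
      (∀ x, HasGradientAt fhat (g x) x) ∧
      ∀ x y, ‖g x - g y‖ ≤ d * G / δ * ‖x - y‖) ∧
    (∀ x, |fhat x - f x| ≤ δ * G) := by
  set K := Metric.closedBall (0 : EuclideanSpace ℝ (Fin d)) 1 with hK
  set μ := (volume K)⁻¹ • volume.restrict K with hμ
  have fK : volume K < ⊤ := measure_closedBall_lt_top
  have pK : 0 < volume K := Metric.measure_closedBall_pos _ _ one_pos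
  have pKr : 0 < volume.real K := ENNReal.toReal_pos pK.ne' fK.ne
  have : IsProbabilityMeasure μ := ⟨by
    simp [hμ, ENNReal.inv_mul_cancel pK.ne' fK.ne]⟩
  have hlip : LipschitzWith ⟨G, hG.le⟩ f := LipschitzWith.of_dist_le_mul fun x y => by
    rw [Real.dist_eq, dist_eq_norm]; exact hf x y
  have hcont : Continuous f := hlip.continuous
  have hac : μ ≪ volume := Measure.smul_absolutelyContinuous.trans Measure.restrict_le_self.absolutelyContinuous
  have hmem : ∀ᵐ v ∂μ, v ∈ K :=
    Measure.ae_smul_measure (ae_restrict_mem measurableSet_closedBall) _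
  have hcl : ∀ x v, v ∈ K → ‖f (x + δ • v) - f x‖ ≤ δ * G := by
    intro x v hv
    have h1 : ‖v‖ ≤ 1 := by simpa [hK] using hv
    have := hf (x + δ • v) x
    rw [add_sub_cancel_left, norm_smul, Real.norm_of_nonneg hδ.le] at this
    rw [Real.norm_eq_abs]
    nlinarith [mul_pos hG hδ]
  have hint : ∀ x, Integrable (fun v => f (x + δ • v)) μ := by
    intro x
    refine Integrable.of_bound (C := |f x| + δ * G) (by fun_prop) ?_
    filter_upwards [hmem] with v hv
    have := hcl x v hv
    have h2 := norm_add_le (f (x + δ • v) - f x) (f x)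
    rw [sub_add_cancel] at h2
    rw [Real.norm_eq_abs (f x)] at h2
    linarith
  refine ⟨?_, ?_, ?_⟩
  · intro α hα
    refine ⟨convex_univ, ?_⟩
    intro x _ y _ a b ha hb hab
    have key : ∀ v, f ((a • x + b • y) + δ • v) ≤
        a * f (x + δ • v) + b * f (y + δ • v) - a * b * (α / 2 * ‖x - y‖ ^ 2) := by
      intro v
      have := hα.2 (Set.mem_univ (x + δ • v)) (Set.mem_univ (y + δ • v)) ha hb hab
      have e : a • (x + δ • v) + b • (y + δ • v) = (a • x + b • y) + δ • v := by
        have : b = 1 - a := by linarith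
        subst this; module
      rw [e, add_sub_add_right_eq_sub] at this
      simpa using this
    have i1 := (hint x).const_mul a
    have i2 := (hint y).const_mul b
    have := integral_mono (hint _) ((i1.add i2).sub (integrable_const (a * b * (α / 2 * ‖x - y‖ ^ 2)))) key
    simp only [hfhat, smul_eq_mul]
    refine this.trans (le_of_eq ?_)
    rw [integral_sub' (i1.add i2) (integrable_const _)]
    rw [integral_add' i1 i2, integral_const_mul, integral_const_mul]
    simp
  · have hDb : ∀ z, ‖fderiv ℝ f z‖ ≤ G := fun z => norm_fderiv_le_of_lipschitz ℝ hlip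
    have hDm : Measurable (fderiv ℝ f) := measurable_fderiv ℝ f
    have hDm' : ∀ x : EuclideanSpace ℝ (Fin d), Measurable (fun v => fderiv ℝ f (x + δ • v)) :=
      fun x => hDm.comp (by fun_prop)
    let L : EuclideanSpace ℝ (Fin d) → (EuclideanSpace ℝ (Fin d) →L[ℝ] ℝ) :=
      fun x => ∫ v, fderiv ℝ f (x + δ • v) ∂μ
    have hL : ∀ x, HasFDerivAt fhat (L x) x := by
      intro x
      have hq : Measure.QuasiMeasurePreserving (fun v : EuclideanSpace ℝ (Fin d) => x + δ • v)
          volume volume :=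
        (measurePreserving_add_left volume x).quasiMeasurePreserving.comp
          (Measure.quasiMeasurePreserving_smul volume hδ.ne')
      have hae : ∀ᵐ v ∂μ, DifferentiableAt ℝ f (x + δ • v) :=
        hac.ae_le (hq.ae hlip.ae_differentiableAt)
      have := hasFDerivAt_integral_of_dominated_loc_of_lip (μ := μ) (𝕜 := ℝ)
        (F := fun x v => f (x + δ • v)) (F' := fun v => fderiv ℝ f (x + δ • v)) (x₀ := x)
        (bound := fun _ => G) (s := Set.univ) Filter.univ_mem
        (Filter.Eventually.of_forall fun x => (hint x).aestronglyMeasurable) (hint x)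
        (hDm' x).aestronglyMeasurable
        (Filter.Eventually.of_forall fun v => by
          refine LipschitzOnWith.of_dist_le_mul fun a _ b _ => ?_
          rw [Real.dist_eq, dist_eq_norm]
          have := hf (a + δ • v) (b + δ • v)
          rw [add_sub_add_right_eq_sub] at this
          simpa [abs_of_pos hG] using this)
        (integrable_const _)
        (by
          filter_upwards [hae] with v hv
          exact (hasFDerivAt_comp_add_right (δ • v)).2 hv.hasFDerivAt)
      rw [show fhat = _ from funext hfhat]
      exact this.2
    refine ⟨fun x => (InnerProductSpace.toDual ℝ _).symm (L x), ?_, ?_⟩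
    · intro x
      rw [hasGradientAt_iff_hasFDerivAt]
      simpa using hL x
    · intro x y
      rw [← map_sub, LinearIsometryEquiv.norm_map]
      have hb := diff_bound (fun v => fderiv ℝ f (x + δ • v)) G hG
        (hDm' x).aestronglyMeasurable (fun v => hDb _) (δ⁻¹ • (y - x))
      have e : ∀ v, x + δ • (v + δ⁻¹ • (y - x)) = y + δ • v := by
        intro v
        rw [smul_add, smul_inv_smul₀ hδ.ne']; abel
      simp only [e] at hb
      simp only [L, hμ, integral_smul_measure]
      rw [← smul_sub, norm_smul, ENNReal.toReal_inv, ← measureReal_def,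
        Real.norm_of_nonneg (by positivity)]
      rw [← hK, norm_smul, norm_inv, Real.norm_of_nonneg hδ.le, norm_sub_rev y x] at hb
      calc _ ≤ _ := mul_le_mul_of_nonneg_left hb (by positivity)
        _ = _ := by field_simp
  · intro x
    have : fhat x - f x = ∫ v, (f (x + δ • v) - f x) ∂μ := by
      rw [integral_sub (hint x) (integrable_const _), hfhat]; simp
    rw [this, ← Real.norm_eq_abs]
    refine (norm_integral_le_of_norm_le_const (hmem.mono fun v hv => hcl x v hv)).trans ?_
    simp
end

section
/- Let K ⊆ ℝ^d be a compact convex set and let f : K → ℝ be α-strongly convex with subgradients bounded in norm by G on K. Let x_1 ∈ K and define projected subgradient iterates x_{s+1} = Π_K(x_s − η_s g_s) with step sizes η_s = 2/(α(s+1)), where g_s is a subgradient of f at x_s with ‖g_s‖ ≤ G. Then for every t ≥ 1, the weighted average satisfies f( (1/t) Σ_{s=1}^t (2s/(t+1)) x_s ) − min_{x ∈ K} f(x) ≤ 2G²/(α(t+1)). -/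
open scoped RealInnerProductSpace

/-- **Convergence of projected subgradient descent for strongly convex functions**
(Theorem 2.11 / Bubeck Thm 3.9): with step sizes `η_s = 2/(α(s+1))`, the weighted
average `(1/t) Σ_{s=1}^t (2s/(t+1)) x_s` has suboptimality at most `2G²/(α(t+1))`. -/
theorem strongly_convex_subgradient_descent
    {d : ℕ} (K : Set (EuclideanSpace ℝ (Fin d)))
    (hKcomp : IsCompact K) (hKconv : Convex ℝ K)
    (proj : EuclideanSpace ℝ (Fin d) → EuclideanSpace ℝ (Fin d))
    (hproj : ∀ y, proj y ∈ K ∧ ∀ z ∈ K, ‖proj y - y‖ ≤ ‖z - y‖)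
    (f : EuclideanSpace ℝ (Fin d) → ℝ)
    (g : EuclideanSpace ℝ (Fin d) → EuclideanSpace ℝ (Fin d))
    (α G : ℝ) (hα : 0 < α) (hG : 0 < G)
    (hsubgrad : ∀ x ∈ K, ∀ y ∈ K, f x + ⟪g x, y - x⟫ + α / 2 * ‖y - x‖ ^ 2 ≤ f y)
    (hGbound : ∀ x ∈ K, ‖g x‖ ≤ G)
    (x : ℕ → EuclideanSpace ℝ (Fin d)) (hx1 : x 1 ∈ K)
    (hrec : ∀ s : ℕ, 1 ≤ s →
      x (s + 1) = proj (x s - (2 / (α * ((s : ℝ) + 1))) • g (x s))) :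
    ∀ t : ℕ, 1 ≤ t → ∀ y ∈ K,
      f ((1 / (t : ℝ)) • ∑ s ∈ Finset.Icc 1 t, ((2 * (s : ℝ)) / ((t : ℝ) + 1)) • x s) - f y ≤
        2 * G ^ 2 / (α * ((t : ℝ) + 1)) := by
  have hproj2 : ∀ u, ∀ y ∈ K, ‖proj u - y‖ ^ 2 ≤ ‖u - y‖ ^ 2 := by
    intro u y hy
    obtain ⟨hp, hmin⟩ := hproj u
    have : Nonempty K := ⟨⟨y, hy⟩⟩
    have heq : ‖u - proj u‖ = ⨅ w : K, ‖u - w‖ := by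
      apply le_antisymm
      · apply le_ciInf
        intro w
        have := hmin w w.2
        rwa [norm_sub_rev, norm_sub_rev (w : EuclideanSpace ℝ (Fin d))] at this
      · exact ciInf_le (f := fun w : K => ‖u - w‖)
          ⟨0, by rintro _ ⟨w, rfl⟩; exact norm_nonneg _⟩ ⟨proj u, hp⟩
    have h := (norm_eq_iInf_iff_real_inner_le_zero hKconv hp).1 heq y hy
    have e : u - y = (u - proj u) - (y - proj u) := by abel
    rw [e, norm_sub_sq_real (u - proj u), norm_sub_rev (proj u) y]
    nlinarith [sq_nonneg ‖u - proj u‖]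
  have hxK : ∀ s : ℕ, 1 ≤ s → x s ∈ K := by
    intro s hs
    induction s, hs using Nat.le_induction with
    | base => exact hx1
    | succ n hn ih => rw [hrec n hn]; exact (hproj _).1
  have hstep : ∀ y ∈ K, ∀ s : ℕ, 1 ≤ s → (s : ℝ) * (f (x s) - f y) ≤
      α / 4 * (s * (s - 1) * ‖x s - y‖ ^ 2 - s * (s + 1) * ‖x (s + 1) - y‖ ^ 2) + G ^ 2 / α := by
    intro y hy s hs
    have h1 := hsubgrad (x s) (hxK s hs) y hy
    have h2 := hproj2 (x s - (2 / (α * ((s : ℝ) + 1))) • g (x s)) y hy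
    rw [← hrec s hs] at h2
    have e : x s - (2 / (α * ((s : ℝ) + 1))) • g (x s) - y
        = (x s - y) - (2 / (α * ((s : ℝ) + 1))) • g (x s) := by abel
    rw [e, norm_sub_sq_real (x s - y), inner_smul_right, norm_smul, mul_pow, Real.norm_eq_abs, sq_abs] at h2
    have e2 : ⟪g (x s), y - x s⟫ = - ⟪x s - y, g (x s)⟫ := by
      rw [← neg_sub (x s) y, inner_neg_right, real_inner_comm]
    rw [e2, norm_sub_rev y] at h1
    have hg : ‖g (x s)‖ ^ 2 ≤ G ^ 2 := by
      have := hGbound _ (hxK s hs)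
      gcongr
    have hs' : (0 : ℝ) ≤ s := Nat.cast_nonneg s
    generalize ⟪x s - y, g (x s)⟫ = c at *
    generalize ‖x s - y‖ ^ 2 = D at *
    generalize ‖x (s + 1) - y‖ ^ 2 = D' at *
    generalize ‖g (x s)‖ ^ 2 = q at *
    generalize (s : ℝ) = r at *
    have h3 : r * (f (x s) - f y) ≤ r * (c - α / 2 * D) :=
      mul_le_mul_of_nonneg_left (by linarith) hs'
    have h4 : D' ≤ D - 2 * (2 / (α * (r + 1)) * c) + (2 / (α * (r + 1))) ^ 2 * G ^ 2 := by
      have := mul_le_mul_of_nonneg_left hg (sq_nonneg (2 / (α * (r + 1))))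
      linarith
    have h5 := mul_le_mul_of_nonneg_left h4 (by positivity : 0 ≤ α / 4 * (r * (r + 1)))
    have e5 : α / 4 * (r * (r + 1)) *
        (D - 2 * (2 / (α * (r + 1)) * c) + (2 / (α * (r + 1))) ^ 2 * G ^ 2)
        = α / 4 * (r * (r + 1)) * D - r * c + r / (r + 1) * (G ^ 2 / α) := by
      field_simp
      ring
    rw [e5] at h5
    have h6 : r / (r + 1) * (G ^ 2 / α) ≤ 1 * (G ^ 2 / α) := by
      apply mul_le_mul_of_nonneg_right _ (by positivity)
      rw [div_le_one (by positivity)]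
      linarith
    linarith
  have hsum : ∀ y ∈ K, ∀ t : ℕ, 1 ≤ t → ∑ s ∈ Finset.Icc 1 t, (s : ℝ) * (f (x s) - f y) ≤
      t * (G ^ 2 / α) - α / 4 * (t * (t + 1) * ‖x (t + 1) - y‖ ^ 2) := by
    intro y hy t ht
    induction t, ht using Nat.le_induction with
    | base =>
      have := hstep y hy 1 le_rfl
      simp at this ⊢
      linarith
    | succ n hn ih =>
      rw [Finset.sum_Icc_succ_top (by omega)]
      have := hstep y hy (n + 1) (by omega)
      push_cast at this ⊢
      linarith
  intro t ht y hy
  have ht' : (0 : ℝ) < t := by exact_mod_cast ht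
  have hid : ∀ n : ℕ, ∑ s ∈ Finset.Icc 1 n, (s : ℝ) = n * (n + 1) / 2 := by
    intro n
    induction n with
    | zero => simp
    | succ n ih =>
      rw [Finset.sum_Icc_succ_top (by omega), ih]
      push_cast
      ring
  have hm : (1 / (t : ℝ)) • ∑ s ∈ Finset.Icc 1 t, ((2 * (s : ℝ)) / ((t : ℝ) + 1)) • x s
      = ∑ s ∈ Finset.Icc 1 t, (2 / (t * ((t : ℝ) + 1)) * s) • x s := by
    rw [Finset.smul_sum]
    refine Finset.sum_congr rfl fun s _ => ?_
    rw [smul_smul]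
    congr 1
    field_simp
  have hw : ∑ s ∈ Finset.Icc 1 t, (2 / (t * ((t : ℝ) + 1)) * s) = 1 := by
    rw [← Finset.mul_sum, hid]
    field_simp
  rw [hm]
  set m := ∑ s ∈ Finset.Icc 1 t, (2 / (t * ((t : ℝ) + 1)) * s) • x s with hmdef
  have hmK : m ∈ K := hKconv.sum_mem (fun s _ => by positivity) hw
    (fun s hs => hxK s (Finset.mem_Icc.1 hs).1)
  have hzero : ∑ s ∈ Finset.Icc 1 t, (2 / (t * ((t : ℝ) + 1)) * s) * ⟪g m, x s - m⟫ = 0 := by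
    simp_rw [← inner_smul_right]
    rw [← inner_sum]
    simp_rw [smul_sub]
    rw [Finset.sum_sub_distrib, ← Finset.sum_smul, hw, ← hmdef]
    simp
  have hJ : ∑ s ∈ Finset.Icc 1 t, (2 / (t * ((t : ℝ) + 1)) * s) * ((f m - f y) + ⟪g m, x s - m⟫)
      ≤ ∑ s ∈ Finset.Icc 1 t, (2 / (t * ((t : ℝ) + 1)) * s) * (f (x s) - f y) := by
    refine Finset.sum_le_sum fun s hs => mul_le_mul_of_nonneg_left ?_ (by positivity)
    have := hsubgrad m hmK (x s) (hxK s (Finset.mem_Icc.1 hs).1)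
    have h0 : 0 ≤ α / 2 * ‖x s - m‖ ^ 2 := by positivity
    linarith
  simp_rw [mul_add] at hJ
  rw [Finset.sum_add_distrib] at hJ
  simp_rw [← mul_add] at hJ
  rw [hzero, ← Finset.sum_mul, hw, one_mul, add_zero] at hJ
  refine hJ.trans ?_
  simp_rw [mul_assoc]
  rw [← Finset.mul_sum]
  have hb := hsum y hy t ht
  have h0 : 0 ≤ α / 4 * (t * (t + 1) * ‖x (t + 1) - y‖ ^ 2) := by positivity
  calc _ ≤ 2 / (t * ((t : ℝ) + 1)) * (t * (G ^ 2 / α)) :=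
        mul_le_mul_of_nonneg_left (by linarith) (by positivity)
    _ = _ := by field_simp
end

section
/- Let K ⊆ ℝ^d be a compact convex set with Euclidean diameter at most D, and let f_1,...,f_T : K → ℝ be convex functions. Let x_1 ∈ K, and for each t let g_t be a subgradient of f_t at x_t with ‖g_t‖ ≤ G. Define the online gradient descent iterates x_{t+1} = Π_K(x_t − η_t g_t) with step sizes η_t = D/(G√t). Then for all T ≥ 1: Σ_{t=1}^T f_t(x_t) − min_{x ∈ K} Σ_{t=1}^T f_t(x) ≤ (3/2)·G·D·√T. -/
open scoped RealInnerProductSpace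

lemma proj_contract_aux {E : Type*} [NormedAddCommGroup E] [InnerProductSpace ℝ E]
    {K : Set E} (hK : Convex ℝ K) {p w y : E} (hp : p ∈ K) (hy : y ∈ K)
    (h : ∀ z ∈ K, ‖p - w‖ ≤ ‖z - w‖) : ‖p - y‖ ^ 2 ≤ ‖w - y‖ ^ 2 := by
  have h1 : ‖w - p‖ = ⨅ z : K, ‖w - z‖ := by
    have : Nonempty K := ⟨⟨p, hp⟩⟩
    apply le_antisymm
    · apply le_ciInf
      intro z
      rw [norm_sub_rev w p, norm_sub_rev w z]
      exact h z z.2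
    · exact ciInf_le (f := fun z : K => ‖w - z‖)
        ⟨0, by rintro _ ⟨z, rfl⟩; exact norm_nonneg _⟩ ⟨p, hp⟩
  have h2 := (norm_eq_iInf_iff_real_inner_le_zero hK hp).1 h1 y hy
  have h3 : w - y = (w - p) - (y - p) := by abel
  rw [h3, norm_sub_sq_real (w - p), norm_sub_rev p y]
  nlinarith [sq_nonneg ‖w - p‖]

lemma step_aux {E : Type*} [NormedAddCommGroup E] [InnerProductSpace ℝ E]
    {x y p g : E} {D G s : ℝ} (hD : 0 < D) (hG : 0 < G) (hs : 0 < s) (hg : ‖g‖ ≤ G)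
    (h : ‖p - y‖ ^ 2 ≤ ‖x - (D / (G * s)) • g - y‖ ^ 2) :
    -⟪g, y - x⟫ ≤ G * s / (2 * D) * (‖x - y‖ ^ 2 - ‖p - y‖ ^ 2) + G * D * (1 / (2 * s)) := by
  have h3 : x - (D / (G * s)) • g - y = (x - y) - (D / (G * s)) • g := by abel
  rw [h3, norm_sub_sq_real (x - y), inner_smul_right, norm_smul, mul_pow, Real.norm_eq_abs, sq_abs,
    real_inner_comm] at h
  have h4 : ⟪g, y - x⟫ = -⟪g, x - y⟫ := by rw [← inner_neg_right, neg_sub]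
  rw [h4]
  have hg2 : ‖g‖ ^ 2 ≤ G ^ 2 := by gcongr
  have h5 : (D / (G * s)) ^ 2 * ‖g‖ ^ 2 ≤ (D / (G * s)) ^ 2 * G ^ 2 := by gcongr
  have h6 : 0 ≤ G * s / (2 * D) := by positivity
  have h7 : 2 * (D / (G * s) * ⟪g, x - y⟫)
      ≤ ‖x - y‖ ^ 2 - ‖p - y‖ ^ 2 + (D / (G * s)) ^ 2 * G ^ 2 := by linarith
  have h8 := mul_le_mul_of_nonneg_left h7 h6
  have e1 : G * s / (2 * D) * (2 * (D / (G * s) * ⟪g, x - y⟫)) = ⟪g, x - y⟫ := by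
    field_simp
  have e2 : G * s / (2 * D) * ((D / (G * s)) ^ 2 * G ^ 2) = G * D * (1 / (2 * s)) := by
    field_simp
  rw [e1, mul_add, e2] at h8
  linarith

/-- **Regret of online gradient descent** with step sizes `η_t = D/(G√t)`:
`Σ_t f_t(x_t) − min_{x ∈ K} Σ_t f_t(x) ≤ (3/2)·G·D·√T`. -/
theorem online_gradient_descent_regret
    {d : ℕ} (K : Set (EuclideanSpace ℝ (Fin d)))
    (hKcomp : IsCompact K) (hKconv : Convex ℝ K)
    (D G : ℝ) (hD : 0 < D) (hG : 0 < G)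
    (hdiam : ∀ x ∈ K, ∀ y ∈ K, ‖x - y‖ ≤ D)
    (proj : EuclideanSpace ℝ (Fin d) → EuclideanSpace ℝ (Fin d))
    (hproj : ∀ y, proj y ∈ K ∧ ∀ z ∈ K, ‖proj y - y‖ ≤ ‖z - y‖)
    (T : ℕ) (hT : 1 ≤ T)
    (f : ℕ → EuclideanSpace ℝ (Fin d) → ℝ)
    (hconv : ∀ t ∈ Finset.Icc 1 T, ConvexOn ℝ K (f t))
    (x : ℕ → EuclideanSpace ℝ (Fin d)) (hx1 : x 1 ∈ K)
    (g : ℕ → EuclideanSpace ℝ (Fin d))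
    (hsub : ∀ t ∈ Finset.Icc 1 T, ∀ y ∈ K, f t (x t) + ⟪g t, y - x t⟫ ≤ f t y)
    (hgbound : ∀ t ∈ Finset.Icc 1 T, ‖g t‖ ≤ G)
    (hrec : ∀ t ∈ Finset.Icc 1 T,
      x (t + 1) = proj (x t - (D / (G * Real.sqrt t)) • g t)) :
    ∀ y ∈ K,
      ∑ t ∈ Finset.Icc 1 T, f t (x t) - ∑ t ∈ Finset.Icc 1 T, f t y ≤
        3 / 2 * G * D * Real.sqrt T := by
  intro y hy
  have key : ∀ n : ℕ, n ≤ T → x (n + 1) ∈ K ∧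
      ∑ t ∈ Finset.Icc 1 n, f t (x t) - ∑ t ∈ Finset.Icc 1 n, f t y ≤
        3 / 2 * G * D * Real.sqrt n - G * Real.sqrt n / (2 * D) * ‖x (n + 1) - y‖ ^ 2 := by
    intro n
    induction n with
    | zero => intro _; simpa using hx1
    | succ n ih =>
      intro hn
      obtain ⟨hxK, hS⟩ := ih (by omega)
      have hm : n + 1 ∈ Finset.Icc 1 T := Finset.mem_Icc.2 ⟨by omega, hn⟩
      have hr := hrec _ hm
      obtain ⟨hpK, hpm⟩ := hproj (x (n + 1) - (D / (G * Real.sqrt ((n + 1 : ℕ) : ℝ))) • g (n + 1))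
      rw [← hr] at hpK hpm
      refine ⟨hpK, ?_⟩
      have hs : 0 < Real.sqrt ((n + 1 : ℕ) : ℝ) := Real.sqrt_pos.2 (by positivity)
      have hstep := step_aux hD hG hs (hgbound _ hm) (proj_contract_aux hKconv hpK hy hpm)
      have hsb := hsub _ hm y hy
      have hd : ‖x (n + 1) - y‖ ^ 2 ≤ D ^ 2 := by
        have := hdiam _ hxK y hy
        gcongr
      rw [Finset.sum_Icc_succ_top (by omega), Finset.sum_Icc_succ_top (by omega)]
      have hr0 := Real.sqrt_nonneg (n : ℝ)
      have hr2 := Real.sq_sqrt (Nat.cast_nonneg (α := ℝ) n)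
      have hs2 := Real.sq_sqrt (Nat.cast_nonneg (α := ℝ) (n + 1))
      have hrs : Real.sqrt (n : ℝ) ≤ Real.sqrt ((n + 1 : ℕ) : ℝ) :=
        Real.sqrt_le_sqrt (by push_cast; linarith)
      have hss : Real.sqrt ((n + 1 : ℕ) : ℝ) ^ 2 = Real.sqrt (n : ℝ) ^ 2 + 1 := by
        rw [hr2, hs2]; push_cast; ring
      clear hr2 hs2
      generalize Real.sqrt ((n + 1 : ℕ) : ℝ) = s at *
      generalize Real.sqrt (n : ℝ) = r at *
      have h1 : 1 / (2 * s) ≤ s - r := by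
        rw [div_le_iff₀ (by positivity)]
        nlinarith
      have h2 : G * D * (1 / (2 * s)) ≤ G * D * (s - r) := by gcongr
      have h3 : G * (s - r) / (2 * D) * ‖x (n + 1) - y‖ ^ 2 ≤ G * (s - r) / (2 * D) * D ^ 2 := by
        have : 0 ≤ s - r := by linarith
        gcongr
      have e3 : G * (s - r) / (2 * D) * D ^ 2 = G * D * (s - r) / 2 := by
        field_simp
      have e4 : G * (s - r) / (2 * D) * ‖x (n + 1) - y‖ ^ 2 =
          G * s / (2 * D) * ‖x (n + 1) - y‖ ^ 2 - G * r / (2 * D) * ‖x (n + 1) - y‖ ^ 2 := by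
        ring
      linarith
  have h := (key T le_rfl).2
  have : 0 ≤ G * Real.sqrt T / (2 * D) * ‖x (T + 1) - y‖ ^ 2 := by positivity
  linarith
end

section
/- Let K ⊆ ℝ^d be a compact convex set, and let f_1,...,f_T : K → ℝ be α-strongly convex functions. Let x_1 ∈ K, and for each t let g_t be a subgradient of f_t at x_t with ‖g_t‖ ≤ G. Define the online gradient descent iterates x_{t+1} = Π_K(x_t − η_t g_t) with step sizes η_t = 1/(α t). Then for all T ≥ 1: Σ_{t=1}^T f_t(x_t) − min_{x ∈ K} Σ_{t=1}^T f_t(x) ≤ (G²/(2α))·(1 + log T). -/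
open scoped RealInnerProductSpace

theorem ogd_proj_aux {E : Type*} [NormedAddCommGroup E] [InnerProductSpace ℝ E]
    (K : Set E) (hK : Convex ℝ K) (u v : E) (hv : v ∈ K)
    (h : ∀ z ∈ K, ‖v - u‖ ≤ ‖z - u‖) (y : E) (hy : y ∈ K) :
    ‖v - y‖ ^ 2 ≤ ‖u - y‖ ^ 2 := by
  have : Nonempty K := ⟨⟨v, hv⟩⟩
  have h1 : ‖u - v‖ = ⨅ w : K, ‖u - w‖ := by
    apply le_antisymm
    · apply le_ciInf
      intro w
      rw [norm_sub_rev u v, norm_sub_rev u w]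
      exact h w w.2
    · exact ciInf_le ⟨0, by rintro _ ⟨w, rfl⟩; exact norm_nonneg _⟩ (⟨v, hv⟩ : K)
  have h2 := (norm_eq_iInf_iff_real_inner_le_zero hK hv).1 h1 y hy
  have h3 : u - y = (u - v) - (y - v) := by abel
  rw [h3, norm_sub_sq_real (u - v), norm_sub_rev v y]
  nlinarith [sq_nonneg ‖u - v‖]

/-- **Logarithmic regret of online gradient descent for strongly convex losses**
with step sizes `η_t = 1/(α t)`:
`Σ_t f_t(x_t) − min_{x ∈ K} Σ_t f_t(x) ≤ (G²/(2α))·(1 + log T)`. -/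
theorem online_gradient_descent_strongly_convex_regret
    {d : ℕ} (K : Set (EuclideanSpace ℝ (Fin d)))
    (hKcomp : IsCompact K) (hKconv : Convex ℝ K)
    (α G : ℝ) (hα : 0 < α) (hG : 0 < G)
    (proj : EuclideanSpace ℝ (Fin d) → EuclideanSpace ℝ (Fin d))
    (hproj : ∀ y, proj y ∈ K ∧ ∀ z ∈ K, ‖proj y - y‖ ≤ ‖z - y‖)
    (T : ℕ) (hT : 1 ≤ T)
    (f : ℕ → EuclideanSpace ℝ (Fin d) → ℝ)
    (x : ℕ → EuclideanSpace ℝ (Fin d)) (hx1 : x 1 ∈ K)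
    (g : ℕ → EuclideanSpace ℝ (Fin d))
    (hstrong : ∀ t ∈ Finset.Icc 1 T, ∀ y ∈ K,
      f t (x t) + ⟪g t, y - x t⟫ + α / 2 * ‖y - x t‖ ^ 2 ≤ f t y)
    (hgbound : ∀ t ∈ Finset.Icc 1 T, ‖g t‖ ≤ G)
    (hrec : ∀ t ∈ Finset.Icc 1 T,
      x (t + 1) = proj (x t - (1 / (α * (t : ℝ))) • g t)) :
    ∀ y ∈ K,
      ∑ t ∈ Finset.Icc 1 T, f t (x t) - ∑ t ∈ Finset.Icc 1 T, f t y ≤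
        G ^ 2 / (2 * α) * (1 + Real.log T) := by
  intro y hy
  have key : ∀ n : ℕ, n ≤ T → x (n + 1) ∈ K ∧
      ∑ t ∈ Finset.Icc 1 n, f t (x t) - ∑ t ∈ Finset.Icc 1 n, f t y
        + α * n / 2 * ‖x (n + 1) - y‖ ^ 2 ≤ G ^ 2 / (2 * α) * ((harmonic n : ℚ) : ℝ) := by
    intro n
    induction n with
    | zero => intro _; simpa using hx1
    | succ n ih =>
      intro hn
      obtain ⟨hxK, ih⟩ := ih (by omega)
      have hm : n + 1 ∈ Finset.Icc 1 T := Finset.mem_Icc.2 ⟨by omega, hn⟩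
      have hs := hstrong _ hm y hy
      have hg := hgbound _ hm
      have hr := hrec _ hm
      have hp := hproj (x (n + 1) - (1 / (α * ((n + 1 : ℕ) : ℝ))) • g (n + 1))
      rw [← hr] at hp
      refine ⟨hp.1, ?_⟩
      have hd := ogd_proj_aux K hKconv _ _ hp.1 hp.2 y hy
      rw [Finset.sum_Icc_succ_top (by omega), Finset.sum_Icc_succ_top (by omega), harmonic_succ]
      have e : x (n + 1) - (1 / (α * ((n + 1 : ℕ) : ℝ))) • g (n + 1) - y
          = (x (n + 1) - y) - (1 / (α * ((n + 1 : ℕ) : ℝ))) • g (n + 1) := by abel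
      rw [e, norm_sub_sq_real (x (n + 1) - y), inner_smul_right, norm_smul, mul_pow, Real.norm_eq_abs, sq_abs,
        real_inner_comm] at hd
      have e2 : ⟪g (n + 1), y - x (n + 1)⟫ = - ⟪g (n + 1), x (n + 1) - y⟫ := by
        rw [← inner_neg_right, neg_sub]
      rw [e2, norm_sub_rev y] at hs
      push_cast at hd ⊢
      have hg2 : ‖g (n + 1)‖ ^ 2 ≤ G ^ 2 := by gcongr
      generalize ‖g (n + 1)‖ ^ 2 = A at *
      generalize ⟪g (n + 1), x (n + 1) - y⟫ = B at *
      generalize ‖x (n + 1) - y‖ ^ 2 = D at *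
      generalize ‖x (n + 1 + 1) - y‖ ^ 2 = D' at *
      have hpos : (0 : ℝ) < n + 1 := by positivity
      have h5 := mul_le_mul_of_nonneg_left hd (show 0 ≤ α * ((n : ℝ) + 1) / 2 by positivity)
      have h6 : α * ((n : ℝ) + 1) / 2 * (D - 2 * (1 / (α * ((n : ℝ) + 1)) * B)
          + (1 / (α * ((n : ℝ) + 1))) ^ 2 * A)
          = α * ((n : ℝ) + 1) / 2 * D - B + A * (1 / (2 * α) * ((n : ℝ) + 1)⁻¹) := by
        field_simp
      have h7 : A * (1 / (2 * α) * ((n : ℝ) + 1)⁻¹) ≤ G ^ 2 * (1 / (2 * α) * ((n : ℝ) + 1)⁻¹) := by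
        gcongr
      have h8 : G ^ 2 / (2 * α) * (((harmonic n : ℚ) : ℝ) + ((n : ℝ) + 1)⁻¹)
        = G ^ 2 / (2 * α) * ((harmonic n : ℚ) : ℝ) + G ^ 2 * (1 / (2 * α) * ((n : ℝ) + 1)⁻¹) := by
        ring
      rw [h8]
      linarith
  have hk := (key T le_rfl).2
  have h1 : 0 ≤ α * T / 2 * ‖x (T + 1) - y‖ ^ 2 := by positivity
  have h2 : G ^ 2 / (2 * α) * ((harmonic T : ℚ) : ℝ) ≤ G ^ 2 / (2 * α) * (1 + Real.log T) :=
    mul_le_mul_of_nonneg_left (harmonic_le_one_add_log T) (by positivity)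
  linarith
end

section
/- Let K ⊆ ℝ^n be a convex set with Euclidean diameter at most D, and let f : K → ℝ be a differentiable α-exp-concave function whose gradients satisfy ‖∇f(x)‖ ≤ G for all x ∈ K. Then for every γ with 0 < γ ≤ (1/2)·min{1/(4GD), α} and all x, y ∈ K: f(x) ≥ f(y) + ⟨∇f(y), x − y⟩ + (γ/2)·(⟨∇f(y), x − y⟩)². -/
open scoped RealInnerProductSpace

/-- **Quadratic lower bound for exp-concave functions.** If `f` is `α`-exp-concave
on a convex set `K` of diameter at most `D` with gradients bounded by `G`, then for
every `0 < γ ≤ (1/2)·min{1/(4GD), α}` and all `x, y ∈ K`: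
`f(x) ≥ f(y) + ⟨∇f(y), x − y⟩ + (γ/2)·⟨∇f(y), x − y⟩²`. -/
theorem exp_concave_quadratic_lower_bound
    {n : ℕ} (K : Set (EuclideanSpace ℝ (Fin n))) (hKconv : Convex ℝ K)
    (α D G : ℝ) (hα : 0 < α) (hD : 0 < D) (hG : 0 < G)
    (hdiam : ∀ x ∈ K, ∀ y ∈ K, ‖x - y‖ ≤ D)
    (f : EuclideanSpace ℝ (Fin n) → ℝ)
    (g : EuclideanSpace ℝ (Fin n) → EuclideanSpace ℝ (Fin n))
    (hg : ∀ x ∈ K, HasGradientAt f (g x) x)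
    (hGb : ∀ x ∈ K, ‖g x‖ ≤ G)
    (hconc : ConcaveOn ℝ K (fun x => Real.exp (-α * f x)))
    (γ : ℝ) (hγ0 : 0 < γ) (hγ : γ ≤ 1 / 2 * min (1 / (4 * G * D)) α) :
    ∀ x ∈ K, ∀ y ∈ K,
      f y + ⟪g y, x - y⟫ + γ / 2 * ⟪g y, x - y⟫ ^ 2 ≤ f x := by
  intro x hx y hy
  set s : ℝ := ⟪g y, x - y⟫ with hs
  have hl := hconc.comp_affineMap (AffineMap.lineMap y x : ℝ →ᵃ[ℝ] EuclideanSpace ℝ (Fin n))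
  have hline : HasDerivAt (fun t : ℝ => (AffineMap.lineMap y x : ℝ →ᵃ[ℝ] EuclideanSpace ℝ (Fin n)) t)
      (x - y) 0 := AffineMap.hasDerivAt_lineMap
  have hfd : HasFDerivAt f (InnerProductSpace.toDual ℝ _ (g y))
      ((AffineMap.lineMap y x : ℝ →ᵃ[ℝ] EuclideanSpace ℝ (Fin n)) 0) := by
    simpa using (hg y hy).hasFDerivAt
  have hd : HasDerivAt (fun t : ℝ => f ((AffineMap.lineMap y x : ℝ →ᵃ[ℝ] EuclideanSpace ℝ (Fin n)) t)) s 0 := by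
    have := hfd.comp_hasDerivAt (0 : ℝ) hline
    rw [InnerProductSpace.toDual_apply_apply] at this
    exact this
  have he := (hd.const_mul (-α)).exp
  have h1 := hl.slope_le_of_hasDerivAt (x := 0) (y := 1) (by simpa using hy) (by simpa using hx)
    one_pos he
  simp [slope_def_field] at h1
  have hu : Real.exp (-α * (f x - f y)) ≤ 1 - α * s := by
    have e1 : Real.exp (-α * (f x - f y)) = Real.exp (-(α * f x)) / Real.exp (-(α * f y)) := by
      rw [← Real.exp_sub]; congr 1; ring
    rw [e1, div_le_iff₀ (Real.exp_pos _)]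
    nlinarith
  have hγα : 2 * γ ≤ α := by linarith [min_le_right (1 / (4 * G * D)) α]
  have hγG : 2 * γ ≤ 1 / (4 * G * D) := by linarith [min_le_left (1 / (4 * G * D)) α]
  have hGD : 0 < G * D := mul_pos hG hD
  have hsb : |s| ≤ G * D := (abs_real_inner_le_norm _ _).trans
    (mul_le_mul (hGb y hy) (hdiam x hx y hy) (norm_nonneg _) hG.le)
  have hz : |2 * γ * s| ≤ 1 / 4 := by
    rw [abs_mul, abs_of_pos (by positivity : 0 < 2 * γ)]
    rw [le_div_iff₀ (by positivity)] at hγG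
    nlinarith
  have hb : Real.exp (-(2 * γ) * (f x - f y)) ≤ 1 - 2 * γ * s := by
    have hβ : 2 * γ / α ≤ 1 := (div_le_one hα).2 hγα
    have hβ0 : 0 ≤ 2 * γ / α := by positivity
    have hc := convexOn_exp.2 (Set.mem_univ (-α * (f x - f y))) (Set.mem_univ (0 : ℝ)) hβ0
      (sub_nonneg.2 hβ) (by ring)
    simp only [smul_eq_mul, mul_zero, add_zero, Real.exp_zero, mul_one] at hc
    have e1 : 2 * γ / α * (-α * (f x - f y)) = -(2 * γ) * (f x - f y) := by field_simp
    rw [e1] at hc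
    have := mul_le_mul_of_nonneg_left hu hβ0
    have e2 : 2 * γ / α * (1 - α * s) = 2 * γ / α - 2 * γ * s := by field_simp
    linarith
  have hlog : -(2 * γ) * (f x - f y) ≤ Real.log (1 - 2 * γ * s) := by
    rw [Real.le_log_iff_exp_le (by linarith [le_abs_self (2 * γ * s)])]
    exact hb
  have key : ∀ z : ℝ, |z| ≤ 1 / 4 → Real.log (1 - z) ≤ -(z + z ^ 2 / 4) := by
    intro z hz
    have h := (abs_le.1 (Real.abs_log_sub_add_sum_range_le (x := z) (by linarith) 3)).2
    have h4 : |z| ^ (3 + 1) / (1 - |z|) ≤ z ^ 2 / 12 := by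
      rw [div_le_iff₀ (by linarith)]
      have : |z| ^ (3 + 1) = z ^ 2 * z ^ 2 := by
        rw [(by decide : Even (3 + 1)).pow_abs]; ring
      rw [this]
      have : z ^ 2 ≤ 1 / 16 := by
        rw [← sq_abs]; nlinarith [abs_nonneg z]
      nlinarith [sq_nonneg z]
    norm_num [Finset.sum_range_succ] at h h4
    nlinarith [sq_nonneg z, (abs_le.1 hz).1, mul_nonneg (sq_nonneg z) (by linarith [(abs_le.1 hz).1] : 0 ≤ z + 1 / 4)]
  have hk := key _ hz
  have : 2 * γ * (s + γ / 2 * s ^ 2) ≤ 2 * γ * (f x - f y) := by nlinarith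
  have := le_of_mul_le_mul_left this (by positivity)
  linarith
end

section
/- Let K ⊆ ℝ^n (n ≥ 2) be a compact convex set with Euclidean diameter at most D, and let f_1,...,f_T : K → ℝ be differentiable α-exp-concave functions with ‖∇f_t(x)‖ ≤ G for all x ∈ K. Set γ = (1/2)·min{1/(4GD), α} and ε = 1/(γ²D²). Run the Online Newton Step algorithm: A_0 = ε·I_n, x_1 ∈ K, and for each t, with ∇_t = ∇f_t(x_t), update A_t = A_{t−1} + ∇_t∇_tᵀ, y_{t+1} = x_t − (1/γ)·A_t^{−1}∇_t, and x_{t+1} = argmin_{x ∈ K} (x − y_{t+1})ᵀ A_t (x − y_{t+1}). Then for T ≥ 8: Σ_{t=1}^T f_t(x_t) − min_{x ∈ K} Σ_{t=1}^T f_t(x) ≤ 5·(1/α + GD)·n·log T. -/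
open scoped RealInnerProductSpace

lemma ons_log_bound (v : ℝ) (hv : |v| ≤ 1 / 4) : Real.log (1 - v) ≤ -v - v ^ 2 / 4 := by
  have h := Real.abs_log_sub_add_sum_range_le (x := v) (by linarith) 3
  simp only [Finset.sum_range_succ, Finset.sum_range_zero] at h
  norm_num at h
  have h1 := (abs_le.mp h).2
  have h2 : |v| ^ 4 / (1 - |v|) ≤ v ^ 2 / 12 := by
    rw [div_le_iff₀ (by linarith)]
    have e : |v| ^ 4 = v ^ 2 * |v| ^ 2 := by rw [← sq_abs v]; ring
    rw [e]
    have : |v| ^ 2 ≤ (1 - |v|) / 12 := by nlinarith [abs_nonneg v]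
    nlinarith [mul_le_mul_of_nonneg_left this (sq_nonneg v)]
  have h3 : -(v ^ 3 / 3) ≤ v ^ 2 / 12 := by
    have := (abs_le.mp hv).1
    nlinarith [mul_nonneg (sq_nonneg v) (by linarith : 0 ≤ v + 1 / 4)]
  nlinarith [sq_nonneg v]

lemma ons_exp_concave {n : ℕ} (K : Set (EuclideanSpace ℝ (Fin n)))
    (α : ℝ) (hα : 0 < α) (f : EuclideanSpace ℝ (Fin n) → ℝ)
    (hconc : ConcaveOn ℝ K (fun z => Real.exp (-α * f z)))
    (x z g : EuclideanSpace ℝ (Fin n)) (hx : x ∈ K) (hz : z ∈ K) (hg : HasGradientAt f g x) :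
    Real.exp (-α * (f z - f x)) ≤ 1 - α * ⟪g, z - x⟫ := by
  have hline : HasDerivAt (fun s : ℝ => x + s • (z - x)) (z - x) 0 := by
    simpa using ((hasDerivAt_id (0:ℝ)).smul_const (z - x)).const_add x
  have hf : HasDerivAt (fun s : ℝ => f (x + s • (z - x))) ⟪g, z - x⟫ 0 := by
    have h := hg.hasFDerivAt
    have h' : HasFDerivAt f ((InnerProductSpace.toDual ℝ _) g) (x + (0:ℝ) • (z - x)) := by
      simpa using h
    have h2 := h'.comp_hasDerivAt (0:ℝ) hline
    rw [InnerProductSpace.toDual_apply_apply] at h2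
    exact h2
  have hφ : HasDerivAt (fun s : ℝ => Real.exp (-α * f (x + s • (z - x))))
      (Real.exp (-α * f x) * (-α * ⟪g, z - x⟫)) 0 := by
    simpa using (hf.const_mul (-α)).exp
  have ht := hφ.tendsto_slope_zero_right
  have hge : Real.exp (-α * f z) - Real.exp (-α * f x) ≤
      Real.exp (-α * f x) * (-α * ⟪g, z - x⟫) := by
    refine ge_of_tendsto ht ?_
    have hmem : Set.Ioo (0:ℝ) 1 ∈ nhdsWithin (0:ℝ) (Set.Ioi 0) := Ioo_mem_nhdsGT one_pos
    filter_upwards [hmem] with s hs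
    have hc := hconc.2 hx hz (by linarith [hs.2] : 0 ≤ 1 - s) hs.1.le (by ring)
    have e : (1 - s) • x + s • z = x + s • (z - x) := by
      rw [smul_sub, sub_smul, one_smul]; abel
    simp only [e, smul_eq_mul] at hc
    simp only [zero_add, zero_smul, add_zero, smul_eq_mul]
    rw [inv_mul_eq_div, le_div_iff₀ hs.1]
    linarith
  have e : Real.exp (-α * (f z - f x)) = Real.exp (-α * f z) / Real.exp (-α * f x) := by
    rw [← Real.exp_sub]; ring_nf
  rw [e, div_le_iff₀ (Real.exp_pos _)]
  linarith

lemma ons_lower {n : ℕ} (K : Set (EuclideanSpace ℝ (Fin n)))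
    (α γ : ℝ) (hγ : 0 < γ) (hγα : 2 * γ ≤ α) (f : EuclideanSpace ℝ (Fin n) → ℝ)
    (hconc : ConcaveOn ℝ K (fun z => Real.exp (-α * f z)))
    (x z g : EuclideanSpace ℝ (Fin n)) (hx : x ∈ K) (hz : z ∈ K) (hg : HasGradientAt f g x)
    (hb : |2 * γ * ⟪g, z - x⟫| ≤ 1 / 4) :
    f x - f z ≤ -⟪g, z - x⟫ - γ / 2 * ⟪g, z - x⟫ ^ 2 := by
  have hα : 0 < α := by linarith
  have h := ons_exp_concave K α hα f hconc x z g hx hz hg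
  set d := ⟪g, z - x⟫
  have hp : 0 ≤ 2 * γ / α := by positivity
  have h1 := Real.rpow_le_rpow (Real.exp_pos _).le h hp
  have h2 : (1 - α * d) ^ (2 * γ / α) ≤ 1 - 2 * γ * d := by
    have := rpow_one_add_le_one_add_mul_self (s := -(α * d))
      (by linarith [Real.exp_pos (-α * (f z - f x))]) hp ((div_le_one hα).2 hγα)
    have e : 2 * γ / α * -(α * d) = - (2 * γ * d) := by field_simp
    rw [e] at this
    simpa [sub_eq_add_neg] using this
  rw [← Real.exp_mul] at h1
  have e : -α * (f z - f x) * (2 * γ / α) = 2 * γ * (f x - f z) := by field_simp; ring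
  rw [e] at h1
  have hpos : 0 < 1 - 2 * γ * d := by linarith [(abs_le.mp hb).2]
  have h3 := (Real.le_log_iff_exp_le hpos).2 (h1.trans h2)
  have h4 := ons_log_bound _ hb
  have h5 : 2 * γ * (f x - f z) ≤ 2 * γ * (-d - γ / 2 * d ^ 2) := by nlinarith
  exact le_of_mul_le_mul_left h5 (by linarith)

lemma ons_logdet {n : ℕ} (L : EuclideanSpace ℝ (Fin n) →ₗ[ℝ] EuclideanSpace ℝ (Fin n))
    (hs : L.IsSymmetric) (ε c : ℝ) (hε : 0 < ε) (hc : 0 < c)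
    (hpos : ∀ v, ε * ‖v‖ ^ 2 ≤ ⟪v, L v⟫) (htr : LinearMap.trace ℝ _ L ≤ n * c) :
    0 < LinearMap.det L ∧ Real.log (LinearMap.det L) ≤ n * Real.log c := by
  have hn : Module.finrank ℝ (EuclideanSpace ℝ (Fin n)) = n := by simp
  have hev : ∀ i, 0 < hs.eigenvalues hn i := by
    intro i
    have h := hpos (hs.eigenvectorBasis hn i)
    rw [hs.apply_eigenvectorBasis, inner_smul_right] at h
    simp at h
    linarith
  have hdet := hs.det_eq_prod_eigenvalues hn
  have htr' := hs.trace_eq_sum_eigenvalues hn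
  simp only [RCLike.ofReal_real_eq_id, id_eq] at hdet htr'
  rw [hdet]
  refine ⟨Finset.prod_pos fun i _ => hev i, ?_⟩
  rw [Real.log_prod (fun i _ => (hev i).ne')]
  have h1 : ∀ i ∈ Finset.univ, Real.log (hs.eigenvalues hn i) ≤
      hs.eigenvalues hn i / c - 1 + Real.log c := by
    intro i _
    have := Real.log_le_sub_one_of_pos (div_pos (hev i) hc)
    rw [Real.log_div (hev i).ne' hc.ne'] at this
    linarith
  refine (Finset.sum_le_sum h1).trans ?_
  rw [Finset.sum_add_distrib, Finset.sum_sub_distrib, ← Finset.sum_div]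
  simp only [Finset.sum_const, Finset.card_univ, Fintype.card_fin, nsmul_eq_mul, mul_one]
  have : (∑ i, hs.eigenvalues hn i) / c ≤ n := by
    rw [div_le_iff₀ hc, ← htr']; exact htr
  linarith

lemma ons_det_step {n : ℕ} (L L' : EuclideanSpace ℝ (Fin n) →ₗ[ℝ] EuclideanSpace ℝ (Fin n))
    (g w : EuclideanSpace ℝ (Fin n)) (h : ∀ v, L' v = L v + ⟪g, v⟫ • g) (hw : L' w = g)
    (hd : 0 < LinearMap.det L) (hd' : 0 < LinearMap.det L') :
    ⟪g, w⟫ ≤ Real.log (LinearMap.det L') - Real.log (LinearMap.det L) := by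
  have e : L = L' * LinearMap.transvection (innerₛₗ ℝ g) (-w) := by
    ext1 v
    simp [LinearMap.transvection.apply, hw, h v]
  have e2 : LinearMap.det L = LinearMap.det L' * (1 - ⟪g, w⟫) := by
    rw [e, map_mul, LinearMap.transvection.det]; simp [sub_eq_add_neg]
  have hp : 0 < 1 - ⟪g, w⟫ := by
    rw [e2] at hd; exact pos_of_mul_pos_right hd hd'.le
  rw [e2, Real.log_mul hd'.ne' hp.ne']
  linarith [Real.log_le_sub_one_of_pos hp]

lemma ons_proj {n : ℕ} (K : Set (EuclideanSpace ℝ (Fin n))) (hK : Convex ℝ K)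
    (L : EuclideanSpace ℝ (Fin n) →ₗ[ℝ] EuclideanSpace ℝ (Fin n))
    (hs : L.IsSymmetric) (hpos : ∀ v, 0 ≤ ⟪v, L v⟫) (p y z : EuclideanSpace ℝ (Fin n))
    (hp : p ∈ K) (hz : z ∈ K)
    (hmin : ∀ z ∈ K, ⟪p - y, L (p - y)⟫ ≤ ⟪z - y, L (z - y)⟫) :
    ⟪p - z, L (p - z)⟫ ≤ ⟪y - z, L (y - z)⟫ := by
  have hexp : ∀ s : ℝ, ∀ a b : EuclideanSpace ℝ (Fin n), ⟪a + s • b, L (a + s • b)⟫ =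
      ⟪a, L a⟫ + 2 * s * ⟪b, L a⟫ + s ^ 2 * ⟪b, L b⟫ := by
    intro s a b
    have : ⟪a, L b⟫ = ⟪b, L a⟫ := by rw [← hs a b, real_inner_comm]
    simp only [map_add, map_smul, inner_add_left, inner_add_right, inner_smul_left,
      inner_smul_right, this]
    simp
    ring
  have hcross : 0 ≤ ⟪z - p, L (p - y)⟫ := by
    by_contra! hneg
    set b := ⟪z - p, L (p - y)⟫
    set q := ⟪z - p, L (z - p)⟫ with hq
    have hq0 : 0 ≤ q := hpos _
    have key : ∀ s : ℝ, 0 ≤ s → s ≤ 1 → 0 ≤ 2 * s * b + s ^ 2 * q := by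
      intro s h0 h1
      have hm : p + s • (z - p) ∈ K := hK.add_smul_sub_mem hp hz ⟨h0, h1⟩
      have h := hmin _ hm
      have e : p + s • (z - p) - y = (p - y) + s • (z - p) := by abel
      rw [e, hexp] at h
      linarith
    have hden : 0 < q - b := by linarith
    have hs0 : 0 < -b / (q - b) := div_pos (by linarith) hden
    have h := key (-b / (q - b)) hs0.le ((div_le_one hden).2 (by linarith))
    have h2 : 0 ≤ 2 * b + (-b / (q - b)) * q := by
      have : 0 ≤ (-b / (q - b)) * (2 * b + (-b / (q - b)) * q) := by linarith
      exact nonneg_of_mul_nonneg_right this hs0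
    have h3 : (-b / (q - b)) * q ≤ -b := by
      rw [div_mul_eq_mul_div, div_le_iff₀ hden]; nlinarith
    linarith
  have h1 := hexp 1 (p - y) (z - p)
  have e1 : p - y + (1:ℝ) • (z - p) = z - y := by rw [one_smul]; abel
  have e2 : ⟪y - z, L (y - z)⟫ = ⟪z - y, L (z - y)⟫ := by
    rw [← neg_sub z y, map_neg, inner_neg_neg]
  have e3 : ⟪p - z, L (p - z)⟫ = ⟪z - p, L (z - p)⟫ := by
    rw [← neg_sub z p, map_neg, inner_neg_neg]
  rw [e1] at h1
  rw [e2, e3, h1]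
  nlinarith [hpos (p - y)]

/-- The linear maps of the algorithm. -/
noncomputable def onsL {n : ℕ} (ε : ℝ) (g : ℕ → EuclideanSpace ℝ (Fin n)) :
    ℕ → (EuclideanSpace ℝ (Fin n) →ₗ[ℝ] EuclideanSpace ℝ (Fin n))
  | 0 => ε • LinearMap.id
  | t + 1 => onsL ε g t + (innerₛₗ ℝ (g (t + 1))).smulRight (g (t + 1))

lemma onsL_succ {n : ℕ} (ε : ℝ) (g : ℕ → EuclideanSpace ℝ (Fin n)) (t : ℕ)
    (v : EuclideanSpace ℝ (Fin n)) :
    onsL ε g (t + 1) v = onsL ε g t v + ⟪g (t + 1), v⟫ • g (t + 1) := by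
  simp [onsL]

lemma onsL_symm {n : ℕ} (ε : ℝ) (g : ℕ → EuclideanSpace ℝ (Fin n)) (t : ℕ) :
    (onsL ε g t).IsSymmetric := by
  induction t with
  | zero => intro u v; simp [onsL, inner_smul_left, inner_smul_right]
  | succ t ih =>
    intro u v
    rw [onsL_succ, onsL_succ, inner_add_left, inner_add_right, ih u v, inner_smul_left,
      inner_smul_right, real_inner_comm u (g (t + 1))]
    simp; ring

lemma onsL_pos {n : ℕ} (ε : ℝ) (g : ℕ → EuclideanSpace ℝ (Fin n)) (t : ℕ)
    (v : EuclideanSpace ℝ (Fin n)) : ε * ‖v‖ ^ 2 ≤ ⟪v, onsL ε g t v⟫ := by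
  induction t with
  | zero => simp [onsL, inner_smul_right]
  | succ t ih =>
    rw [onsL_succ, inner_add_right, inner_smul_right, real_inner_comm (g (t + 1)) v]
    nlinarith [mul_self_nonneg ⟪g (t + 1), v⟫]

lemma onsL_trace {n : ℕ} (ε G : ℝ) (g : ℕ → EuclideanSpace ℝ (Fin n)) (T : ℕ)
    (hg : ∀ t ∈ Finset.Icc 1 T, ‖g t‖ ≤ G) (t : ℕ) (ht : t ≤ T) :
    LinearMap.trace ℝ _ (onsL ε g t) ≤ n * ε + t * G ^ 2 := by
  induction t with
  | zero => simp [onsL, LinearMap.trace_id, mul_comm]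
  | succ t ih =>
    have h := ih (by omega)
    have h2 := hg (t + 1) (by simp; omega)
    have h3 : ‖g (t + 1)‖ ^ 2 ≤ G ^ 2 := by gcongr
    simp only [onsL, map_add, LinearMap.trace_smulRight, innerₛₗ_apply_apply,
      real_inner_self_eq_norm_sq]
    push_cast
    linarith

/-- **Regret of the Online Newton Step algorithm** for `α`-exp-concave losses:
with `γ = (1/2)·min{1/(4GD), α}` and `ε = 1/(γ²D²)`, for `T ≥ 8`,
`Σ_t f_t(x_t) − min_{x ∈ K} Σ_t f_t(x) ≤ 5·(1/α + GD)·n·log T`.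
The matrices `A_t` are encoded as the linear maps `v ↦ A_t v`; the Newton direction
`A_t⁻¹ ∇_t` is the (unique) vector `w_t` with `A_t w_t = ∇_t`, and `x_{t+1}` is the
projection of `y_{t+1}` onto `K` in the norm induced by `A_t`. -/
theorem online_newton_step_regret
    {n : ℕ} (hn : 2 ≤ n)
    (K : Set (EuclideanSpace ℝ (Fin n)))
    (hKcomp : IsCompact K) (hKconv : Convex ℝ K)
    (α D G : ℝ) (hα : 0 < α) (hD : 0 < D) (hG : 0 < G)
    (hdiam : ∀ x ∈ K, ∀ y ∈ K, ‖x - y‖ ≤ D)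
    (T : ℕ) (hT : 8 ≤ T)
    (f : ℕ → EuclideanSpace ℝ (Fin n) → ℝ)
    (hconc : ∀ t ∈ Finset.Icc 1 T, ConcaveOn ℝ K (fun z => Real.exp (-α * f t z)))
    (gf : ℕ → EuclideanSpace ℝ (Fin n) → EuclideanSpace ℝ (Fin n))
    (hgf : ∀ t ∈ Finset.Icc 1 T, ∀ z ∈ K, HasGradientAt (f t) (gf t z) z)
    (hGb : ∀ t ∈ Finset.Icc 1 T, ∀ z ∈ K, ‖gf t z‖ ≤ G)
    (γ ε : ℝ)
    (hγ : γ = 1 / 2 * min (1 / (4 * G * D)) α)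
    (hε : ε = 1 / (γ ^ 2 * D ^ 2))
    (x y w : ℕ → EuclideanSpace ℝ (Fin n))
    (A : ℕ → EuclideanSpace ℝ (Fin n) → EuclideanSpace ℝ (Fin n))
    (hx1 : x 1 ∈ K)
    (hA0 : ∀ v, A 0 v = ε • v)
    (hArec : ∀ t ∈ Finset.Icc 1 T, ∀ v,
      A t v = A (t - 1) v + ⟪gf t (x t), v⟫ • gf t (x t))
    (hw : ∀ t ∈ Finset.Icc 1 T, A t (w t) = gf t (x t))
    (hy : ∀ t ∈ Finset.Icc 1 T, y (t + 1) = x t - (1 / γ) • w t)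
    (hproj : ∀ t ∈ Finset.Icc 1 T, x (t + 1) ∈ K ∧
      ∀ z ∈ K, ⟪x (t + 1) - y (t + 1), A t (x (t + 1) - y (t + 1))⟫ ≤
        ⟪z - y (t + 1), A t (z - y (t + 1))⟫) :
    ∀ z ∈ K,
      ∑ t ∈ Finset.Icc 1 T, f t (x t) - ∑ t ∈ Finset.Icc 1 T, f t z ≤
        5 * (1 / α + G * D) * n * Real.log T := by
  intro z hz
  have hGD : 0 < G * D := mul_pos hG hD
  have hmin1 : 0 < min (1 / (4 * G * D)) α := lt_min (by positivity) hα
  have hγ0 : 0 < γ := by rw [hγ]; linarith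
  have hγα : 2 * γ ≤ α := by
    rw [hγ]; linarith [min_le_right (1 / (4 * G * D)) α]
  have hγG : 2 * γ * (G * D) ≤ 1 / 4 := by
    have h : 2 * γ ≤ 1 / (4 * G * D) := by
      rw [hγ]; linarith [min_le_left (1 / (4 * G * D)) α]
    calc 2 * γ * (G * D) ≤ 1 / (4 * G * D) * (G * D) := by gcongr
      _ = 1 / 4 := by field_simp
  have hγinv : 1 / (2 * γ) ≤ 4 * (1 / α + G * D) := by
    rw [div_le_iff₀ (by linarith)]
    have h : 2 * γ = min (1 / (4 * G * D)) α := by rw [hγ]; ring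
    rw [h]
    rcases min_choice (1 / (4 * G * D)) α with h | h <;> rw [h]
    · have : 4 * (1 / α + G * D) * (1 / (4 * G * D)) = 1 + 1 / (α * (G * D)) := by
        field_simp
        ring
      rw [this]
      have : 0 < 1 / (α * (G * D)) := by positivity
      linarith
    · have : 4 * (1 / α + G * D) * α = 4 + 4 * (G * D * α) := by field_simp
      rw [this]
      have : 0 < G * D * α := by positivity
      linarith
  have hε0 : 0 < ε := by rw [hε]; positivity
  set g : ℕ → EuclideanSpace ℝ (Fin n) := fun t => gf t (x t) with hgdef
  set L := onsL ε g with hL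
  have hAL : ∀ t, t ≤ T → ∀ v, A t v = L t v := by
    intro t
    induction t with
    | zero => intro _ v; simp [hA0, hL, onsL]
    | succ t ih =>
      intro ht v
      rw [hArec (t + 1) (by simp; omega), hL, onsL_succ]
      simp only [Nat.add_sub_cancel]
      rw [ih (by omega)]
  have hxK : ∀ t ∈ Finset.Icc 1 T, x t ∈ K := by
    intro t ht
    rw [Finset.mem_Icc] at ht
    rcases Nat.lt_or_ge 1 t with h | h
    · have := (hproj (t - 1) (by simp; omega)).1
      rwa [Nat.sub_add_cancel (by omega)] at this
    · have : t = 1 := by omega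
      rw [this]; exact hx1
  have hgb : ∀ t ∈ Finset.Icc 1 T, ‖g t‖ ≤ G := fun t ht => hGb t ht _ (hxK t ht)
  have hc0 : 0 < ε + T * G ^ 2 := by positivity
  have hdet : ∀ t ≤ T, 0 < LinearMap.det (L t) ∧
      Real.log (LinearMap.det (L t)) ≤ n * Real.log (ε + T * G ^ 2) := by
    intro t ht
    refine ons_logdet (L t) (onsL_symm ε g t) ε _ hε0 hc0 (onsL_pos ε g t) ?_
    refine (onsL_trace ε G g T hgb t ht).trans ?_
    have h1 : (t : ℝ) ≤ T := by exact_mod_cast ht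
    have h2 : (1 : ℝ) ≤ n := by exact_mod_cast (by omega : 1 ≤ n)
    have h3 : (t : ℝ) * G ^ 2 ≤ T * G ^ 2 := by gcongr
    have h4 : 0 ≤ (T : ℝ) * G ^ 2 := by positivity
    nlinarith
  have main : ∀ t ≤ T, ∑ s ∈ Finset.Icc 1 t, (f s (x s) - f s z) ≤
      γ / 2 * (⟪x 1 - z, L 0 (x 1 - z)⟫ - ⟪x (t + 1) - z, L t (x (t + 1) - z)⟫) +
      1 / (2 * γ) * (Real.log (LinearMap.det (L t)) - Real.log (LinearMap.det (L 0))) := by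
    intro t
    induction t with
    | zero => simp
    | succ t ih =>
      intro ht
      have ih := ih (by omega)
      have hm : t + 1 ∈ Finset.Icc 1 T := by simp; omega
      rw [Finset.sum_Icc_succ_top (by omega)]
      have hLs : ∀ v, L (t + 1) v = L t v + ⟪g (t + 1), v⟫ • g (t + 1) := onsL_succ ε g t
      have hwL : L (t + 1) (w (t + 1)) = g (t + 1) := by
        rw [← hAL _ ht]; exact hw _ hm
      have hds := ons_det_step (L t) (L (t + 1)) _ _ hLs hwL (hdet t (by omega)).1 (hdet _ ht).1
      obtain ⟨hpK, hpm⟩ := hproj _ hm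
      have hp := ons_proj K hKconv (L (t + 1)) (onsL_symm ε g (t + 1))
        (fun v => le_trans (by positivity) (onsL_pos ε g (t + 1) v)) _ (y (t + 1 + 1)) z hpK hz
        (fun z hz => by simpa only [hAL _ ht] using hpm z hz)
      have hd : |⟪g (t + 1), z - x (t + 1)⟫| ≤ G * D :=
        (abs_real_inner_le_norm _ _).trans
          (mul_le_mul (hgb _ hm) (hdiam _ hz _ (hxK _ hm)) (norm_nonneg _) hG.le)
      have hlow := ons_lower K α γ hγ0 hγα (f (t + 1)) (hconc _ hm) (x (t + 1)) z (g (t + 1))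
        (hxK _ hm) hz (hgf _ hm _ (hxK _ hm)) (by
          rw [abs_mul, abs_of_pos (by linarith : 0 < 2 * γ)]
          exact (mul_le_mul_of_nonneg_left hd (by linarith)).trans hγG)
      set u := x (t + 1) - z with hu
      have e1 : ⟪g (t + 1), z - x (t + 1)⟫ = -⟪g (t + 1), u⟫ := by
        rw [hu, ← inner_neg_right, neg_sub]
      have e2 : y (t + 1 + 1) - z = u - (1 / γ) • w (t + 1) := by
        rw [hy _ hm, hu]; abel
      have e3 : ⟪u, L (t + 1) u⟫ = ⟪u, L t u⟫ + ⟪g (t + 1), u⟫ ^ 2 := by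
        rw [hLs, inner_add_right, inner_smul_right, real_inner_comm (g (t + 1)) u]; ring
      have e4 : ⟪y (t + 1 + 1) - z, L (t + 1) (y (t + 1 + 1) - z)⟫ =
          ⟪u, L t u⟫ + ⟪g (t + 1), u⟫ ^ 2 - 2 / γ * ⟪g (t + 1), u⟫
            + 1 / γ ^ 2 * ⟪g (t + 1), w (t + 1)⟫ := by
        have hsy : ⟪w (t + 1), L (t + 1) u⟫ = ⟪g (t + 1), u⟫ := by
          rw [← onsL_symm ε g (t + 1) (w (t + 1)) u, ← hL, hwL]
        rw [e2, ← e3]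
        simp only [map_sub, map_smul, inner_sub_left, inner_sub_right, inner_smul_left,
          inner_smul_right, hwL, hsy, real_inner_comm (g (t + 1)) u,
          real_inner_comm (g (t + 1)) (w (t + 1))]
        simp
        ring
      rw [e4] at hp
      rw [e1] at hlow
      have hp2 := mul_le_mul_of_nonneg_left hp (by linarith : 0 ≤ γ / 2)
      have e5 : γ / 2 * (⟪u, L t u⟫ + ⟪g (t + 1), u⟫ ^ 2 - 2 / γ * ⟪g (t + 1), u⟫
            + 1 / γ ^ 2 * ⟪g (t + 1), w (t + 1)⟫) =
          γ / 2 * ⟪u, L t u⟫ + γ / 2 * ⟪g (t + 1), u⟫ ^ 2 - ⟪g (t + 1), u⟫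
            + 1 / (2 * γ) * ⟪g (t + 1), w (t + 1)⟫ := by
        field_simp
      rw [e5] at hp2
      have hds2 := mul_le_mul_of_nonneg_left hds (by positivity : 0 ≤ 1 / (2 * γ))
      linarith
  have hfin := main T le_rfl
  rw [Finset.sum_sub_distrib] at hfin
  refine hfin.trans ?_
  have hq0 : ⟪x 1 - z, L 0 (x 1 - z)⟫ ≤ ε * D ^ 2 := by
    have : L 0 (x 1 - z) = ε • (x 1 - z) := by simp [hL, onsL]
    rw [this, inner_smul_right, real_inner_self_eq_norm_sq]
    have := hdiam _ hx1 _ hz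
    gcongr
  have hqT : 0 ≤ ⟪x (T + 1) - z, L T (x (T + 1) - z)⟫ :=
    le_trans (by positivity) (onsL_pos ε g T _)
  have hterm1 : γ / 2 * (⟪x 1 - z, L 0 (x 1 - z)⟫ - ⟪x (T + 1) - z, L T (x (T + 1) - z)⟫)
      ≤ 1 / (2 * γ) := by
    calc _ ≤ γ / 2 * (ε * D ^ 2) := by gcongr; linarith
      _ = 1 / (2 * γ) := by rw [hε]; field_simp
  have hdet0 : Real.log (LinearMap.det (L 0)) = n * Real.log ε := by
    simp [hL, onsL, LinearMap.det_smul, Real.log_pow]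
  have hT8 : (8 : ℝ) ≤ T := by exact_mod_cast hT
  have hlogdet : Real.log (LinearMap.det (L T)) - Real.log (LinearMap.det (L 0)) ≤
      n * Real.log T := by
    have h1 := (hdet T le_rfl).2
    have h2 : Real.log (ε + T * G ^ 2) ≤ Real.log ε + Real.log T := by
      rw [← Real.log_mul hε0.ne' (by linarith)]
      apply Real.log_le_log hc0
      have h3 : G ^ 2 ≤ ε / 64 := by
        rw [hε, div_div, le_div_iff₀ (by positivity)]
        have : 0 < γ * (G * D) := by positivity
        nlinarith
      have : (T:ℝ) * G ^ 2 ≤ T * (ε / 64) := by gcongr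
      nlinarith
    have h4 := mul_le_mul_of_nonneg_left h2 (Nat.cast_nonneg (α := ℝ) n)
    rw [hdet0]; linarith
  have hlogT : 2 ≤ Real.log T := by
    have h1 : Real.log 8 ≤ Real.log T := Real.log_le_log (by norm_num) hT8
    have h2 : Real.log 8 = 3 * Real.log 2 := by
      rw [show (8:ℝ) = 2 ^ 3 by norm_num, Real.log_pow]; norm_num
    linarith [Real.log_two_gt_d9]
  have hn2 : (2 : ℝ) ≤ n := by exact_mod_cast hn
  have hnT : 4 ≤ n * Real.log T := by nlinarith
  have hterm2 : 1 / (2 * γ) * (Real.log (LinearMap.det (L T)) - Real.log (LinearMap.det (L 0)))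
      ≤ 1 / (2 * γ) * (n * Real.log T) := by gcongr
  calc _ ≤ 1 / (2 * γ) + 1 / (2 * γ) * (n * Real.log T) := add_le_add hterm1 hterm2
    _ = 1 / (2 * γ) * (1 + n * Real.log T) := by ring
    _ ≤ 4 * (1 / α + G * D) * (1 + n * Real.log T) := by gcongr
    _ ≤ 4 * (1 / α + G * D) * (5 / 4 * (n * Real.log T)) := by gcongr; linarith
    _ = _ := by ring
end

section
/- Fix δ > 0 and let f : ℝ^n → ℝ be Lipschitz continuous. Define the smoothed function f̂_δ(x) = E_{v ~ Unif(B)}[f(x + δv)], where B is the unit Euclidean ball in ℝ^n. Then f̂_δ is differentiable and for every x ∈ ℝ^n: E_{u ~ Unif(S)}[f(x + δu)·u] = (δ/n)·∇f̂_δ(x), where the expectation on the left is the vector of coordinatewise expectations over u drawn uniformly from the unit Euclidean sphere S = {u ∈ ℝ^n : ‖u‖ = 1}. -/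
open MeasureTheory

section A
open Metric Set Filter Topology

lemma aux_rn {m : ℕ} (μ ρ : Measure (EuclideanSpace ℝ (Fin m))) [IsFiniteMeasure μ] [IsFiniteMeasure ρ]
    (hac : μ ≪ ρ) (hρ : ∀ᵐ x ∂ρ, x ∈ sphere (0 : EuclideanSpace ℝ (Fin m)) 1)
    (h1 : ∀ x ∈ sphere (0 : EuclideanSpace ℝ (Fin m)) 1, ∀ y ∈ sphere (0 : EuclideanSpace ℝ (Fin m)) 1,
      ∀ r, μ (closedBall x r) = μ (closedBall y r))
    (h2 : ∀ x ∈ sphere (0 : EuclideanSpace ℝ (Fin m)) 1, ∀ y ∈ sphere (0 : EuclideanSpace ℝ (Fin m)) 1,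
      ∀ r, ρ (closedBall x r) = ρ (closedBall y r)) :
    ∃ c : ENNReal, μ = c • ρ := by
  have hT := (Besicovitch.ae_tendsto_rnDeriv μ ρ).and hρ
  by_cases h0 : ρ = 0
  · refine ⟨0, ?_⟩
    subst h0
    simpa using hac
  have : NeZero ρ := ⟨h0⟩
  obtain ⟨x0, hx0, hx0S⟩ := hT.exists
  refine ⟨μ.rnDeriv ρ x0, ?_⟩
  have hL : μ.HaveLebesgueDecomposition ρ := Measure.haveLebesgueDecomposition_of_sigmaFinite μ ρ
  rw [← withDensity_const]
  refine (Measure.withDensity_rnDeriv_eq μ ρ hac).symm.trans ?_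
  apply withDensity_congr_ae
  filter_upwards [hT] with x hx
  refine tendsto_nhds_unique hx.1 ?_
  simpa only [h1 x hx.2 x0 hx0S, h2 x hx.2 x0 hx0S] using hx0

lemma aux_unique {m : ℕ} (μ ν : Measure (EuclideanSpace ℝ (Fin m))) [IsFiniteMeasure μ] [IsFiniteMeasure ν]
    (hμ : ∀ᵐ x ∂μ, x ∈ sphere (0 : EuclideanSpace ℝ (Fin m)) 1)
    (hν : ∀ᵐ x ∂ν, x ∈ sphere (0 : EuclideanSpace ℝ (Fin m)) 1)
    (h1 : ∀ x ∈ sphere (0 : EuclideanSpace ℝ (Fin m)) 1, ∀ y ∈ sphere (0 : EuclideanSpace ℝ (Fin m)) 1,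
      ∀ r, μ (closedBall x r) = μ (closedBall y r))
    (h2 : ∀ x ∈ sphere (0 : EuclideanSpace ℝ (Fin m)) 1, ∀ y ∈ sphere (0 : EuclideanSpace ℝ (Fin m)) 1,
      ∀ r, ν (closedBall x r) = ν (closedBall y r)) :
    (ν univ) • μ = (μ univ) • ν := by
  have hs : ∀ᵐ x ∂(μ + ν), x ∈ sphere (0 : EuclideanSpace ℝ (Fin m)) 1 :=
    ae_add_measure_iff.2 ⟨hμ, hν⟩
  have h3 : ∀ x ∈ sphere (0 : EuclideanSpace ℝ (Fin m)) 1, ∀ y ∈ sphere (0 : EuclideanSpace ℝ (Fin m)) 1,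
      ∀ r, (μ + ν) (closedBall x r) = (μ + ν) (closedBall y r) := by
    intro x hx y hy r
    simp [h1 x hx y hy r, h2 x hx y hy r]
  obtain ⟨c, hc⟩ := aux_rn μ (μ + ν) (Measure.AbsolutelyContinuous.rfl.add_right ν) hs h1 h3
  obtain ⟨d, hd⟩ := aux_rn ν (μ + ν) (by rw [add_comm]; exact (Measure.AbsolutelyContinuous.rfl.add_right μ)) hs h2 h3
  generalize μ + ν = ρ at hc hd
  subst hc hd
  simp only [Measure.smul_apply, smul_smul, smul_eq_mul]
  congr 1
  ring

lemma aux_iso {m : ℕ} (x y : EuclideanSpace ℝ (Fin m)) (hx : x ∈ sphere (0 : EuclideanSpace ℝ (Fin m)) 1)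
    (hy : y ∈ sphere (0 : EuclideanSpace ℝ (Fin m)) 1) :
    ∃ e : EuclideanSpace ℝ (Fin m) ≃ₗᵢ[ℝ] EuclideanSpace ℝ (Fin m), e x = y := by
  have : ‖x‖ = ‖y‖ := by simp_all
  exact ⟨_, Submodule.reflection_sub this⟩

lemma aux_haus_inv {m : ℕ} (d : ℝ) (e : EuclideanSpace ℝ (Fin m) ≃ₗᵢ[ℝ] EuclideanSpace ℝ (Fin m))
    (s : Set (EuclideanSpace ℝ (Fin m))) :
    (μH[d] : Measure (EuclideanSpace ℝ (Fin m))) (e '' s) = μH[d] s :=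
  e.toIsometryEquiv.hausdorffMeasure_image d s

lemma aux_image_inter {m : ℕ} (e : EuclideanSpace ℝ (Fin m) ≃ₗᵢ[ℝ] EuclideanSpace ℝ (Fin m))
    (x : EuclideanSpace ℝ (Fin m)) (r : ℝ) :
    e '' (closedBall x r ∩ sphere 0 1) = closedBall (e x) r ∩ sphere 0 1 := by
  rw [image_inter e.injective, e.image_closedBall, e.image_sphere, map_zero]

lemma aux_haus_pos (m : ℕ) :
    (μH[(m : ℝ)] : Measure (EuclideanSpace ℝ (Fin (m + 1)))) (sphere 0 1) ≠ 0 := by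
  let T : EuclideanSpace ℝ (Fin (m + 1)) → (Fin m → ℝ) := fun x i => x i.succ
  have hT : LipschitzWith 1 T := by
    refine LipschitzWith.of_dist_le_mul fun x y => ?_
    rw [dist_pi_le_iff (by positivity)]
    intro i
    have := PiLp.norm_apply_le (x - y) i.succ
    simpa [T, dist_eq_norm] using this
  intro h0
  have h1 := hT.hausdorffMeasure_image_le (d := m) (by positivity) (sphere 0 1)
  rw [h0, mul_zero] at h1
  have h2 : (μH[(m : ℝ)] : Measure (Fin m → ℝ)) = volume := by
    have := hausdorffMeasure_pi_real (ι := Fin m)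
    simpa using this
  rw [h2] at h1
  have h3 : {y : Fin m → ℝ | ∑ i, y i ^ 2 < 1} ⊆ T '' sphere 0 1 := by
    intro y hy
    refine ⟨WithLp.toLp 2 (Fin.cons (√(1 - ∑ i, y i ^ 2)) y), ?_, ?_⟩
    · simp only [mem_ofPred_eq] at hy
      rw [mem_sphere_zero_iff_norm, EuclideanSpace.norm_eq]
      simp [Fin.sum_univ_succ, Real.sq_sqrt (by linarith : 0 ≤ 1 - ∑ i, y i ^ 2)]
    · ext i; simp [T]
  have h4 : IsOpen {y : Fin m → ℝ | ∑ i, y i ^ 2 < 1} :=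
    isOpen_lt (by fun_prop) continuous_const
  have h5 := h4.measure_pos volume ⟨0, by simp⟩
  exact absurd (h5.trans_le (measure_mono h3)) (by simpa using h1)

lemma aux_haus_fin (m : ℕ) :
    (μH[(m : ℝ)] : Measure (EuclideanSpace ℝ (Fin (m + 1)))) (sphere 0 1) ≠ ⊤ := by
  have h2 : (μH[(m : ℝ)] : Measure (Fin m → ℝ)) = volume := by
    have := hausdorffMeasure_pi_real (ι := Fin m)
    simpa using this
  let P : (Fin m → ℝ) → EuclideanSpace ℝ (Fin (m + 1)) := fun y =>
    WithLp.toLp 2 (Fin.cons (√(1 - ∑ i, y i ^ 2)) y)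
  have hP : ContDiffAt ℝ 1 P 0 := by
    rw [contDiffAt_piLp]
    intro i
    refine Fin.cases ?_ (fun j => ?_) i
    · simp only [P, Fin.cons_zero]
      refine ContDiffAt.sqrt (by fun_prop) (by simp)
    · simp only [P, Fin.cons_succ]
      fun_prop
  obtain ⟨K, t, ht, hK⟩ := hP.exists_lipschitzOnWith
  let V := t ∩ ball 0 1
  have hV : V ∈ 𝓝 (0 : Fin m → ℝ) := inter_mem ht (ball_mem_nhds _ one_pos)
  have hfin : (μH[(m : ℝ)] : Measure (EuclideanSpace ℝ (Fin (m + 1)))) (P '' V) < ⊤ := by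
    refine ((hK.mono inter_subset_left).hausdorffMeasure_image_le (d := m) (by positivity)).trans_lt ?_
    refine ENNReal.mul_lt_top (by simp) ?_
    rw [h2]
    exact (measure_mono inter_subset_right).trans_lt measure_ball_lt_top
  let e0 : EuclideanSpace ℝ (Fin (m + 1)) := EuclideanSpace.single 0 1
  have he0 : e0 ∈ sphere (0 : EuclideanSpace ℝ (Fin (m + 1))) 1 := by simp [e0]
  have hnb : P '' V ∈ 𝓝[sphere 0 1] e0 := by
    have hc : Continuous (fun x : EuclideanSpace ℝ (Fin (m + 1)) => (fun i : Fin m => x i.succ)) := by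
      fun_prop
    have hc0 : Continuous (fun x : EuclideanSpace ℝ (Fin (m + 1)) => x 0) := by fun_prop
    have e1 : (fun x : EuclideanSpace ℝ (Fin (m + 1)) => (fun i : Fin m => x i.succ)) ⁻¹' V ∈ 𝓝 e0 := by
      apply hc.continuousAt.preimage_mem_nhds
      convert hV using 2
      ext i; simp [e0]
    have e2 : (fun x : EuclideanSpace ℝ (Fin (m + 1)) => x 0) ⁻¹' Ioi 0 ∈ 𝓝 e0 :=
      hc0.continuousAt.preimage_mem_nhds (Ioi_mem_nhds (by simp [e0]))
    filter_upwards [mem_nhdsWithin_of_mem_nhds e1, mem_nhdsWithin_of_mem_nhds e2, self_mem_nhdsWithin]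
      with x hx1 hx2 hx3
    refine ⟨_, hx1, ?_⟩
    rw [mem_sphere_zero_iff_norm, EuclideanSpace.norm_eq, Real.sqrt_eq_one, Fin.sum_univ_succ] at hx3
    simp only [Real.norm_eq_abs, sq_abs] at hx3
    ext i
    refine Fin.cases ?_ (fun j => ?_) i
    · simp only [P, Fin.cons_zero]
      rw [Real.sqrt_eq_iff_mul_self_eq_of_pos hx2]
      linarith
    · simp [P]
  have := (isCompact_sphere (0 : EuclideanSpace ℝ (Fin (m + 1))) 1).measure_lt_top_of_nhdsWithin
    (μ := μH[(m : ℝ)]) ?_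
  · exact this.ne
  intro x hx
  obtain ⟨e, he⟩ := aux_iso e0 x he0 hx
  refine ⟨e '' (P '' V), ?_, ?_⟩
  · have hh : Tendsto e.symm (𝓝[sphere 0 1] x) (𝓝[sphere 0 1] e0) := by
      have h : e.symm x = e0 := by rw [← he]; simp
      have := (e.symm.continuous.continuousWithinAt (s := sphere 0 1) (x := x)).tendsto_nhdsWithin
        (t := sphere 0 1) (fun z hz => by simpa using hz)
      rwa [h] at this
    have := hh hnb
    rw [mem_map] at this
    filter_upwards [this] with z hz
    exact ⟨_, hz, by simp⟩
  · rw [aux_haus_inv]; exact hfin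

/-- Surface measure on the sphere pushed to the ambient space. -/
noncomputable def sig (m : ℕ) : Measure (EuclideanSpace ℝ (Fin (m + 1))) :=
  (Measure.toSphere (volume : Measure (EuclideanSpace ℝ (Fin (m + 1))))).map Subtype.val

instance (m : ℕ) : IsFiniteMeasure (sig m) := by unfold sig; infer_instance

lemma sig_univ (m : ℕ) : sig m univ =
    (m + 1 : ℕ) * volume (closedBall (0 : EuclideanSpace ℝ (Fin (m + 1))) 1) := by
  rw [sig, Measure.map_apply measurable_subtype_coe .univ, preimage_univ, Measure.toSphere_apply_univ,
    Measure.addHaar_closedBall_eq_addHaar_ball]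
  simp

lemma sig_mem (m : ℕ) : ∀ᵐ x ∂(sig m), x ∈ sphere (0 : EuclideanSpace ℝ (Fin (m + 1))) 1 := by
  rw [sig]
  refine (ae_map_iff (p := fun x => x ∈ sphere (0 : EuclideanSpace ℝ (Fin (m + 1))) 1)
    measurable_subtype_coe.aemeasurable isClosed_sphere.measurableSet).2 ?_
  exact Eventually.of_forall fun x => x.2

open scoped Pointwise in
lemma sig_ball (m : ℕ) (x : EuclideanSpace ℝ (Fin (m + 1))) (r : ℝ) : sig m (closedBall x r) =
    (m + 1 : ℕ) * volume (Ioo (0 : ℝ) 1 • (closedBall x r ∩ sphere 0 1)) := by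
  rw [sig, Measure.map_apply measurable_subtype_coe measurableSet_closedBall,
    Measure.toSphere_apply' _ (measurable_subtype_coe measurableSet_closedBall),
    Subtype.image_preimage_coe, inter_comm]
  simp

open scoped Pointwise in
lemma sig_inv (m : ℕ) (x : EuclideanSpace ℝ (Fin (m + 1))) (hx : x ∈ sphere (0 : EuclideanSpace ℝ (Fin (m + 1))) 1)
    (y : EuclideanSpace ℝ (Fin (m + 1))) (hy : y ∈ sphere (0 : EuclideanSpace ℝ (Fin (m + 1))) 1) (r : ℝ) :
    sig m (closedBall x r) = sig m (closedBall y r) := by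
  obtain ⟨e, rfl⟩ := aux_iso x y hx hy
  rw [sig_ball, sig_ball, ← aux_image_inter]
  have : Ioo (0 : ℝ) 1 • (e '' (closedBall x r ∩ sphere 0 1)) =
      e '' (Ioo (0 : ℝ) 1 • (closedBall x r ∩ sphere 0 1)) := by
    rw [← image2_smul, ← image2_smul, image_image2, image2_image_right]
    simp
  rw [this]
  congr 1
  have h := e.symm.measurePreserving.measure_preimage_equiv (f := e.symm.toMeasurableEquiv) (Ioo (0 : ℝ) 1 • (closedBall x r ∩ sphere 0 1))
  rw [← h]
  congr 1
  ext z
  simp only [mem_preimage, mem_image]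
  constructor
  · intro hz; exact ⟨_, hz, by simp⟩
  · rintro ⟨w, hw, rfl⟩; simpa using hw

lemma haus_eq_sig (m : ℕ) :
    ((μH[(m : ℝ)] (sphere (0 : EuclideanSpace ℝ (Fin (m + 1))) 1))⁻¹ •
            (μH[(m : ℝ)] : Measure (EuclideanSpace ℝ (Fin (m + 1)))).restrict (sphere 0 1)) =
    (sig m univ)⁻¹ • sig m := by
  set μ := (μH[(m : ℝ)] : Measure (EuclideanSpace ℝ (Fin (m + 1)))).restrict (sphere 0 1) with hμ
  have hu : μH[(m : ℝ)] (sphere (0 : EuclideanSpace ℝ (Fin (m + 1))) 1) = μ univ := by simp [hμ]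
  have h0 := aux_haus_pos m
  have ht := aux_haus_fin m
  rw [hu] at h0 ht ⊢
  have : IsFiniteMeasure μ := ⟨ht.lt_top⟩
  have key := aux_unique μ (sig m) (ae_restrict_mem isClosed_sphere.measurableSet) (sig_mem m) ?_
    (sig_inv m)
  · have s0 : sig m univ ≠ 0 := by
      rw [sig_univ]
      exact mul_ne_zero (by simp) (measure_closedBall_pos _ _ one_pos).ne'
    have st : sig m univ ≠ ⊤ := measure_ne_top _ _
    have := congrArg (fun ν => ((μ univ)⁻¹ * (sig m univ)⁻¹) • ν) key
    simp only [smul_smul] at this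
    rw [mul_assoc, ENNReal.inv_mul_cancel s0 st, mul_right_comm, ENNReal.inv_mul_cancel h0 ht] at this
    simpa using this
  · intro x hx y hy r
    obtain ⟨e, rfl⟩ := aux_iso x y hx hy
    rw [hμ, Measure.restrict_apply measurableSet_closedBall, Measure.restrict_apply measurableSet_closedBall,
      ← aux_image_inter, aux_haus_inv]
end A
section B
open Metric Set Filter Topology

lemma polar {m : ℕ} (h : EuclideanSpace ℝ (Fin (m + 1)) → ℝ) (hi : Integrable h) :
    ∫ v, h v = ∫ r in Ioi (0 : ℝ), r ^ m * ∫ u : sphere (0 : EuclideanSpace ℝ (Fin (m + 1))) 1, h (r • u.1)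
      ∂(Measure.toSphere volume) := by
  let E := EuclideanSpace ℝ (Fin (m + 1))
  have hmp := (volume : Measure E).measurePreserving_homeomorphUnitSphereProd
  have hd : Module.finrank ℝ E - 1 = m := by simp [E]
  rw [hd] at hmp
  have hmp' := hmp.symm (homeomorphUnitSphereProd E).toMeasurableEquiv
  have e1 : ∫ v, h v = ∫ x : ({(0)}ᶜ : Set E), h x.1 ∂((volume : Measure E).comap (↑)) := by
    rw [integral_subtype_comap (measurableSet_singleton _).compl h, restrict_compl_singleton]
  have i1 : Integrable (fun x : ({(0)}ᶜ : Set E) => h x.1) ((volume : Measure E).comap (↑)) := by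
    have := (integrableOn_iff_comap_subtypeVal (μ := (volume : Measure E)) (f := h)
      (measurableSet_singleton (0 : E)).compl).1 hi.integrableOn
    exact this
  have e2 : ∫ x : ({(0)}ᶜ : Set E), h x.1 ∂((volume : Measure E).comap (↑)) =
      ∫ p : sphere (0 : E) 1 × Ioi (0 : ℝ), h (p.2.1 • p.1.1)
        ∂((Measure.toSphere volume).prod (Measure.volumeIoiPow m)) := by
    rw [← hmp'.integral_comp (MeasurableEquiv.measurableEmbedding _)]
    congr 1
  have i2 : Integrable (fun p : sphere (0 : E) 1 × Ioi (0 : ℝ) => h (p.2.1 • p.1.1))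
      ((Measure.toSphere volume).prod (Measure.volumeIoiPow m)) :=
    (hmp'.integrable_comp_emb (MeasurableEquiv.measurableEmbedding _)).2 i1
  rw [e1, e2, integral_prod_symm _ i2]
  simp only [Measure.volumeIoiPow, ENNReal.ofReal]
  rw [integral_withDensity_eq_integral_smul,
        integral_subtype_comap measurableSet_Ioi fun a ↦ Real.toNNReal (a ^ m) •
          ∫ u : sphere (0 : E) 1, h (a • u.1) ∂(Measure.toSphere volume),
        setIntegral_congr_fun measurableSet_Ioi fun x hx ↦ ?_]
  · simp only [NNReal.smul_def]
    rw [Real.coe_toNNReal _ (pow_nonneg hx.out.le _), smul_eq_mul]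
  · exact (measurable_subtype_coe.pow_const _).real_toNNReal

lemma phi_lip {m : ℕ} (R : ℝ) :
    LipschitzWith 1 (fun v : EuclideanSpace ℝ (Fin m) => max 0 (R - ‖v‖)) := by
  refine LipschitzWith.const_max ?_ 0
  refine LipschitzWith.of_dist_le_mul fun x y => ?_
  rw [Real.dist_eq, dist_eq_norm]
  have := abs_norm_sub_norm_le y x
  rw [norm_sub_rev] at this
  simpa using this

lemma phi_supp {m : ℕ} (R : ℝ) :
    HasCompactSupport (fun v : EuclideanSpace ℝ (Fin m) => max 0 (R - ‖v‖)) := by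
  refine HasCompactSupport.intro (isCompact_closedBall 0 R) fun x hx => ?_
  simp at hx
  simpa using hx.le

lemma phi_deriv {m : ℕ} (R : ℝ) (v w : EuclideanSpace ℝ (Fin m)) (hv : v ≠ 0) (hR : ‖v‖ ≠ R) :
    lineDeriv ℝ (fun v : EuclideanSpace ℝ (Fin m) => max 0 (R - ‖v‖)) v (-w) =
      (ball 0 R).indicator (fun v => inner ℝ v w / ‖v‖) v := by
  by_cases h : ‖v‖ < R
  · have hev : (fun v : EuclideanSpace ℝ (Fin m) => max 0 (R - ‖v‖)) =ᶠ[𝓝 v] fun v => R - ‖v‖ := by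
      filter_upwards [(isOpen_lt continuous_norm continuous_const).mem_nhds h] with z hz
      have hz' : ‖z‖ < R := hz
      exact max_eq_right (by linarith)
    rw [hev.lineDeriv_eq, indicator_of_mem (by simpa using h)]
    have h1 : HasFDerivAt (fun v : EuclideanSpace ℝ (Fin m) => √(‖v‖ ^ 2)) _ v :=
      ((hasStrictFDerivAt_norm_sq v).hasFDerivAt).sqrt (by simpa using hv)
    simp only [Real.sqrt_sq (norm_nonneg _)] at h1
    have h2 := (h1.const_sub R).hasLineDerivAt (-w)
    rw [h2.lineDeriv]
    simp
    field_simp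
  · have h' : R < ‖v‖ := lt_of_le_of_ne (not_lt.1 h) (Ne.symm hR)
    have hev : (fun v : EuclideanSpace ℝ (Fin m) => max 0 (R - ‖v‖)) =ᶠ[𝓝 v] fun v => 0 := by
      filter_upwards [(isOpen_lt continuous_const continuous_norm).mem_nhds h'] with z hz
      have hz' : R < ‖z‖ := hz
      exact max_eq_left (by linarith)
    rw [hev.lineDeriv_eq, indicator_of_notMem (by simpa using h)]
    simp [lineDeriv]

lemma ae_ne {m : ℕ} (R : ℝ) : ∀ᵐ v : EuclideanSpace ℝ (Fin (m + 1)), v ≠ 0 ∧ ‖v‖ ≠ R := by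
  have h1 : ∀ᵐ v : EuclideanSpace ℝ (Fin (m + 1)), v ∉ sphere (0 : EuclideanSpace ℝ (Fin (m + 1))) R :=
    measure_eq_zero_iff_ae_notMem.1 (Measure.addHaar_sphere volume 0 R)
  have h2 : ∀ᵐ v : EuclideanSpace ℝ (Fin (m + 1)), v ∉ ({0} : Set (EuclideanSpace ℝ (Fin (m + 1)))) :=
    measure_eq_zero_iff_ae_notMem.1 (measure_singleton 0)
  filter_upwards [h1, h2] with v h1 h2
  exact ⟨by simpa using h2, by simpa using h1⟩

lemma stokes {m : ℕ} (g : EuclideanSpace ℝ (Fin (m + 1)) → ℝ) (C : NNReal) (hg : LipschitzWith C g)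
    (w : EuclideanSpace ℝ (Fin (m + 1))) :
    ∫ v in closedBall 0 1, lineDeriv ℝ g v w = ∫ u, g u * inner ℝ u w ∂(sig m) := by
  let E := EuclideanSpace ℝ (Fin (m + 1))
  let K : ℝ → ℝ := fun r => r ^ m * ∫ u : sphere (0 : E) 1, g (r • u.1) * inner ℝ u.1 w
      ∂(Measure.toSphere volume)
  have hgc := hg.continuous
  have hK : Continuous K := by
    refine (continuous_pow m).mul ?_
    have := continuous_parametric_integral_of_continuous (μ := (Measure.toSphere (volume : Measure E)))
      (f := fun (r : ℝ) (u : sphere (0 : E) 1) => g (r • u.1) * inner ℝ u.1 w)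
      (by unfold Function.uncurry; fun_prop) isCompact_univ
    simpa using this
  have hL : ∀ R : ℝ, 0 < R → ∫ v : E, lineDeriv ℝ g v w * max 0 (R - ‖v‖) = ∫ r in (0)..R, K r := by
    intro R hR
    rw [hg.integral_lineDeriv_mul_eq (phi_lip R) (phi_supp R) w]
    have : ∫ x : E, lineDeriv ℝ (fun v : E => max 0 (R - ‖v‖)) x (-w) * g x =
        ∫ x : E, (ball 0 R).indicator (fun v => g v * (inner ℝ v w / ‖v‖)) x := by
      apply integral_congr_ae
      filter_upwards [ae_ne R] with v hv
      rw [phi_deriv R v w hv.1 hv.2]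
      by_cases h : v ∈ ball (0 : E) R
      · simp only [indicator_of_mem h]; ring
      · simp only [indicator_of_notMem h]; ring
    rw [this, polar]
    · rw [intervalIntegral.integral_of_le hR.le, integral_Ioc_eq_integral_Ioo,
        ← integral_indicator measurableSet_Ioi, ← integral_indicator measurableSet_Ioo]
      congr 1
      ext r
      by_cases h0 : 0 < r
      · have hn : ∀ u : sphere (0 : E) 1, ‖r • u.1‖ = r := fun u => by
          simp [norm_smul, abs_of_pos h0]
        rw [indicator_of_mem (by exact h0)]
        by_cases hr : r < R
        · rw [indicator_of_mem (by exact ⟨h0, hr⟩)]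
          simp only [K]
          congr 2
          ext u
          rw [indicator_of_mem (by rw [mem_ball_zero_iff, hn]; exact hr), hn, real_inner_smul_left]
          field_simp
        · rw [indicator_of_notMem (fun h => hr h.2)]
          have : ∀ u : sphere (0 : E) 1, (ball 0 R).indicator (fun v => g v * (inner ℝ v w / ‖v‖)) (r • u.1) = 0 :=
            fun u => indicator_of_notMem (by rw [mem_ball_zero_iff, hn]; exact hr) _
          simp [this]
      · rw [indicator_of_notMem (by exact fun h => h0 h), indicator_of_notMem (by exact fun h => h0 h.1)]
    · rw [integrable_indicator_iff measurableSet_ball]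
      have hb : IntegrableOn (fun v : E => ‖g v‖ * ‖w‖) (ball 0 R) :=
        (ContinuousOn.integrableOn_compact (isCompact_closedBall _ _) (Continuous.continuousOn (by fun_prop))).mono_set ball_subset_closedBall
      refine Integrable.mono' hb ?_ (Eventually.of_forall fun v => ?_)
      · apply Measurable.aestronglyMeasurable
        have := hgc.measurable
        fun_prop
      · rw [norm_mul, norm_div, norm_norm]
        refine mul_le_mul_of_nonneg_left ?_ (norm_nonneg _)
        refine div_le_of_le_mul₀ (norm_nonneg _) (norm_nonneg _) ?_
        rw [mul_comm]
        exact norm_inner_le_norm v w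
  have hR : HasDerivAt (fun R => ∫ r in (0)..R, K r) (K 1) 1 :=
    intervalIntegral.integral_hasDerivAt_right (hK.intervalIntegrable _ _)
      (hK.stronglyMeasurableAtFilter _ _) hK.continuousAt
  have hbd : ∀ v, ‖lineDeriv ℝ g v w‖ ≤ C * ‖w‖ := fun v => norm_lineDeriv_le_of_lipschitz ℝ hg
  have hmeas : Measurable (fun v => lineDeriv ℝ g v w) := measurable_lineDeriv hgc
  have hLd := (hasDerivAt_integral_of_dominated_loc_of_lip (𝕜 := ℝ) (x₀ := (1 : ℝ)) (s := ball 1 1)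
    (μ := (volume : Measure E).restrict (closedBall 0 2))
    (F := fun (R : ℝ) (v : E) => lineDeriv ℝ g v w * max 0 (R - ‖v‖))
    (F' := (closedBall 0 1).indicator fun v => lineDeriv ℝ g v w) (bound := fun _ => C * ‖w‖)
    (ball_mem_nhds _ one_pos) ?_ ?_ ?_ ?_ ?_ ?_).2
  · have hev : (fun R : ℝ => ∫ v in closedBall (0 : E) 2, lineDeriv ℝ g v w * max 0 (R - ‖v‖))
        =ᶠ[𝓝 1] fun R => ∫ r in (0)..R, K r := by
      filter_upwards [Ioo_mem_nhds (zero_lt_one) (one_lt_two : (1 : ℝ) < 2)] with R hR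
      rw [← hL R hR.1]
      apply setIntegral_eq_integral_of_forall_compl_eq_zero
      intro x hx
      simp at hx
      rw [max_eq_left (by linarith [hR.2]), mul_zero]
    have := (hR.congr_of_eventuallyEq hev).unique hLd
    rw [setIntegral_indicator measurableSet_closedBall,
      inter_eq_right.2 (closedBall_subset_closedBall one_le_two)] at this
    rw [← this]
    simp only [K, sig, one_pow, one_mul, one_smul]
    rw [(MeasurableEmbedding.subtype_coe isClosed_sphere.measurableSet).integral_map]
  · refine Eventually.of_forall fun R => Measurable.aestronglyMeasurable ?_
    fun_prop
  · have hb : IntegrableOn (fun v : E => C * ‖w‖ * (max 0 (1 - ‖v‖))) (closedBall 0 2) :=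
      (ContinuousOn.integrableOn_compact (isCompact_closedBall _ _) (Continuous.continuousOn (by fun_prop)))
    refine Integrable.mono' hb (Measurable.aestronglyMeasurable (by fun_prop)) (Eventually.of_forall fun v => ?_)
    rw [norm_mul, Real.norm_of_nonneg (le_max_left 0 (1 - ‖v‖))]
    exact mul_le_mul_of_nonneg_right (hbd v) (le_max_left _ _)
  · exact (hmeas.indicator measurableSet_closedBall).aestronglyMeasurable
  · refine Eventually.of_forall fun v => LipschitzOnWith.of_dist_le_mul fun R _ R' _ => ?_
    rw [dist_eq_norm, ← mul_sub, norm_mul, Real.coe_nnabs, abs_of_nonneg (by positivity)]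
    refine mul_le_mul (hbd v) ?_ (norm_nonneg _) (by positivity)
    have := abs_max_sub_max_le_abs (R - ‖v‖) (R' - ‖v‖) 0
    rw [max_comm 0, max_comm 0, Real.dist_eq]
    simpa using this
  · exact integrableOn_const measure_closedBall_lt_top.ne
  · filter_upwards [ae_restrict_of_ae (ae_ne (m := m) 1)] with v hv
    by_cases h : ‖v‖ < 1
    · rw [indicator_of_mem (by simpa using h.le)]
      have : (fun R => lineDeriv ℝ g v w * max 0 (R - ‖v‖)) =ᶠ[𝓝 1]
          fun R => lineDeriv ℝ g v w * (R - ‖v‖) := by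
        filter_upwards [Ioi_mem_nhds h] with R hR
        rw [max_eq_right (by linarith [mem_Ioi.1 hR])]
      refine HasDerivAt.congr_of_eventuallyEq ?_ this
      simpa using ((hasDerivAt_id (1 : ℝ)).sub_const ‖v‖).const_mul (lineDeriv ℝ g v w)
    · have h' : 1 < ‖v‖ := lt_of_le_of_ne (not_lt.1 h) (Ne.symm hv.2)
      rw [indicator_of_notMem (by simpa using h')]
      have : (fun R => lineDeriv ℝ g v w * max 0 (R - ‖v‖)) =ᶠ[𝓝 1] fun R => 0 := by
        filter_upwards [Iio_mem_nhds h'] with R hR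
        rw [max_eq_left (by linarith [mem_Iio.1 hR]), mul_zero]
      exact (hasDerivAt_const _ _).congr_of_eventuallyEq this

lemma grad_fhat {m : ℕ} (f : EuclideanSpace ℝ (Fin (m + 1)) → ℝ) (G : NNReal) (hf : LipschitzWith G f)
    (δ : ℝ) (hδ : 0 < δ) (x : EuclideanSpace ℝ (Fin (m + 1))) :
    ∃ L : EuclideanSpace ℝ (Fin (m + 1)) →L[ℝ] ℝ,
      HasFDerivAt (fun x => ∫ v in closedBall 0 1, f (x + δ • v)) L x ∧
      ∀ w, δ * L w = ∫ u, f (x + δ • u) * inner ℝ u w ∂(sig m) := by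
  let E := EuclideanSpace ℝ (Fin (m + 1))
  have hfc := hf.continuous
  have hae : ∀ᵐ v : E, DifferentiableAt ℝ f (x + δ • v) := by
    have hq : Measure.QuasiMeasurePreserving (fun v : E => x + δ • v) volume volume := by
      have h1 := (measurePreserving_add_left (volume : Measure E) x).quasiMeasurePreserving
      have h2 : Measure.QuasiMeasurePreserving (fun v : E => δ • v) volume volume := by
        refine ⟨by fun_prop, ?_⟩
        rw [Measure.map_addHaar_smul _ hδ.ne']
        exact Measure.smul_absolutelyContinuous
      exact h1.comp h2
    exact hq.ae hf.ae_differentiableAt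
  obtain ⟨hi, hd⟩ := hasFDerivAt_integral_of_dominated_loc_of_lip (𝕜 := ℝ) (x₀ := x) (s := univ)
    (μ := (volume : Measure E).restrict (closedBall 0 1))
    (F := fun x v => f (x + δ • v)) (F' := fun v => fderiv ℝ f (x + δ • v)) (bound := fun _ => G)
    univ_mem (Eventually.of_forall fun y => (by fun_prop : Continuous fun v : E => f (y + δ • v)).aestronglyMeasurable)
    (ContinuousOn.integrableOn_compact (isCompact_closedBall _ _) (Continuous.continuousOn (by fun_prop)))
    ((measurable_fderiv ℝ f).comp (by fun_prop)).aestronglyMeasurable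
    (Eventually.of_forall fun v => by
      refine LipschitzOnWith.of_dist_le_mul fun y _ z _ => ?_
      simpa using hf.dist_le_mul (y + δ • v) (z + δ • v))
    (integrableOn_const measure_closedBall_lt_top.ne)
    (by
      filter_upwards [ae_restrict_of_ae hae] with v hv
      exact (hasFDerivAt_comp_add_right (δ • v)).2 hv.hasFDerivAt)
  refine ⟨_, hd, fun w => ?_⟩
  have hg : LipschitzWith (G * δ.toNNReal) (fun v => f (x + δ • v)) := by
    refine LipschitzWith.of_dist_le_mul fun y z => ?_
    have := hf.dist_le_mul (x + δ • y) (x + δ • z)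
    rw [dist_add_left, dist_smul₀, Real.norm_of_nonneg hδ.le, ← mul_assoc] at this
    simpa [hδ.le] using this
  rw [← stokes _ _ hg w, ContinuousLinearMap.integral_apply hi, ← integral_const_mul]
  apply integral_congr_ae
  filter_upwards [ae_restrict_of_ae hae] with v hv
  have h1 : HasFDerivAt (fun v : E => x + δ • v) (δ • ContinuousLinearMap.id ℝ E) v :=
    ((hasFDerivAt_id v).const_smul δ).const_add x
  have h2 := (hv.hasFDerivAt.comp v h1).hasLineDerivAt w
  have h3 := h2.lineDeriv
  simp only [Function.comp_def] at h3
  rw [h3]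
  simp
end B

theorem sphere_sampling_gradient_estimator
    {n : ℕ} (hn : 1 ≤ n) (δ : ℝ) (hδ : 0 < δ)
    (f : EuclideanSpace ℝ (Fin n) → ℝ)
    (G : NNReal) (hf : LipschitzWith G f)
    (fhat : EuclideanSpace ℝ (Fin n) → ℝ)
    (hfhat : ∀ x, fhat x =
      ∫ v, f (x + δ • v)
        ∂((volume (Metric.closedBall (0 : EuclideanSpace ℝ (Fin n)) 1))⁻¹ •
            volume.restrict (Metric.closedBall (0 : EuclideanSpace ℝ (Fin n)) 1))) :
    ∀ x, ∃ g, HasGradientAt fhat g x ∧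
      (∫ u, f (x + δ • u) • u
        ∂((μH[(n : ℝ) - 1] (Metric.sphere (0 : EuclideanSpace ℝ (Fin n)) 1))⁻¹ •
            (μH[(n : ℝ) - 1] :
              Measure (EuclideanSpace ℝ (Fin n))).restrict (Metric.sphere 0 1)))
        = (δ / n) • g := by
  intro x
  obtain ⟨m, rfl⟩ : ∃ m, n = m + 1 := ⟨n - 1, by omega⟩
  obtain ⟨L, hL, hw⟩ := grad_fhat f G hf δ hδ x
  set b := (volume (Metric.closedBall (0 : EuclideanSpace ℝ (Fin (m + 1))) 1)) with hb
  have hc : ((m + 1 : ℕ) : ℝ) - 1 = m := by push_cast; ring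
  rw [hc, haus_eq_sig, sig_univ]
  have hfc := hf.continuous
  have hint : Integrable (fun u => f (x + δ • u) • u) (sig m) := by
    have h : Continuous (fun u : EuclideanSpace ℝ (Fin (m + 1)) => f (x + δ • u) • u) := by fun_prop
    obtain ⟨B, hB⟩ := (isCompact_sphere (0 : EuclideanSpace ℝ (Fin (m + 1))) 1).exists_bound_of_continuousOn
      h.continuousOn
    refine Integrable.of_bound h.aestronglyMeasurable B ?_
    filter_upwards [sig_mem m] with u hu using hB u hu
  have hfun : fhat = fun x => (b⁻¹).toReal • ∫ v in Metric.closedBall 0 1, f (x + δ • v) := by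
    ext y
    rw [hfhat y, integral_smul_measure]
  refine ⟨(InnerProductSpace.toDual ℝ _).symm ((b⁻¹).toReal • L), ?_, ?_⟩
  · rw [hasGradientAt_iff_hasFDerivAt, LinearIsometryEquiv.apply_symm_apply, hfun]
    exact hL.const_smul (b⁻¹).toReal
  · refine ext_inner_right ℝ fun w => ?_
    rw [integral_smul_measure, real_inner_smul_left, real_inner_smul_left,
      InnerProductSpace.toDual_symm_apply, real_inner_comm, ← integral_inner hint]
    have : ∀ u : EuclideanSpace ℝ (Fin (m + 1)), inner ℝ w (f (x + δ • u) • u) = f (x + δ • u) * inner ℝ u w := by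
      intro u
      rw [real_inner_smul_right, real_inner_comm]
    simp only [this, ← hw w, smul_apply, smul_eq_mul, ENNReal.toReal_inv,
      ENNReal.toReal_mul, ENNReal.toReal_natCast, mul_inv]
    ring
end

section
/- Let K ⊆ ℝ^d be a compact convex set with Euclidean diameter at most D, and let f_1,...,f_T : K → ℝ be differentiable convex functions with ‖∇f_t(x)‖ ≤ G for all x ∈ K. Run the online conditional gradient algorithm with parameters η = D/(2G·T^{3/4}) and σ_t = min{1, 2/t^{1/2}}: starting from x_1 ∈ K, at each round t set ∇_t = ∇f_t(x_t), define F_t(x) = η·Σ_{τ=1}^{t−1} ⟨∇_τ, x⟩ + ‖x − x_1‖², compute v_t ∈ argmin_{x ∈ K} ⟨∇F_t(x_t), x⟩, and set x_{t+1} = (1 − σ_t)x_t + σ_t v_t. Then: Σ_{t=1}^T f_t(x_t) − min_{x ∈ K} Σ_{t=1}^T f_t(x) ≤ 8·D·G·T^{3/4}. -/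
open scoped RealInnerProductSpace

lemma ocg_grad {E : Type*} [NormedAddCommGroup E] [InnerProductSpace ℝ E] [CompleteSpace E]
    {K : Set E} {f : E → ℝ} (hf : ConvexOn ℝ K f) {x y g : E} (hx : x ∈ K) (hy : y ∈ K)
    (hg : HasGradientAt f g x) : f x - f y ≤ ⟪g, x - y⟫ := by
  have h1 : HasDerivAt (fun l : ℝ => f (AffineMap.lineMap x y l)) ⟪g, y - x⟫ 0 := by
    have h2 : HasFDerivAt f (InnerProductSpace.toDual ℝ E g) (AffineMap.lineMap x y (0:ℝ)) := by
      simpa using hg.hasFDerivAt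
    have h3 := h2.comp_hasDerivAt (0:ℝ) (AffineMap.hasDerivAt_lineMap (a := x) (b := y))
    have h4 : (InnerProductSpace.toDual ℝ E g) (y - x) = ⟪g, y - x⟫ := by simp
    rw [h4] at h3
    exact h3
  have h4 := hf.comp_affineMap (AffineMap.lineMap x y : ℝ →ᵃ[ℝ] E)
  have h5 := h4.le_slope_of_hasDerivAt (x := 0) (y := 1) (by simpa using hx) (by simpa using hy)
    one_pos h1
  simp [slope_def_field] at h5
  have : ⟪g, x - y⟫ = - ⟪g, y - x⟫ := by rw [← inner_neg_right]; simp
  linarith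

lemma ocg_strong {E : Type*} [NormedAddCommGroup E] [InnerProductSpace ℝ E]
    {K : Set E} (hK : Convex ℝ K) (s c : E) {m y : E} (hm : m ∈ K) (hy : y ∈ K)
    (hmin : ∀ z ∈ K, ⟪s, m⟫ + ‖m - c‖ ^ 2 ≤ ⟪s, z⟫ + ‖z - c‖ ^ 2) :
    ⟪s, m⟫ + ‖m - c‖ ^ 2 + ‖y - m‖ ^ 2 ≤ ⟪s, y⟫ + ‖y - c‖ ^ 2 := by
  have key : ∀ l : ℝ, 0 < l → l < 1 →
      0 ≤ (⟪s, y⟫ + ‖y - c‖ ^ 2 - (⟪s, m⟫ + ‖m - c‖ ^ 2) - ‖y - m‖ ^ 2) + l * ‖y - m‖ ^ 2 := by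
    intro l h0 h1
    have := hmin _ (hK hm hy (by linarith : 0 ≤ 1 - l) h0.le (by ring))
    have e1 : (1 - l) • m + l • y - c = (m - c) + l • (y - m) := by module
    have e2 : y - c = (m - c) + (y - m) := by abel
    have e3 : ⟪s, y⟫ = ⟪s, m⟫ + ⟪s, y - m⟫ := by rw [← inner_add_right]; simp
    have e4 : ⟪s, (1 - l) • m + l • y⟫ = ⟪s, m⟫ + l * ⟪s, y - m⟫ := by
      rw [← real_inner_smul_right, ← inner_add_right]; congr 1; module
    rw [e1, norm_add_sq_real, norm_smul, inner_smul_right, mul_pow, e4] at this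
    rw [e3, e2, norm_add_sq_real]
    simp only [Real.norm_eq_abs, sq_abs] at this
    have : 0 ≤ l * (⟪s, y - m⟫ + 2 * ⟪m - c, y - m⟫ + l * ‖y - m‖ ^ 2) := by linarith
    have := nonneg_of_mul_nonneg_right this h0
    linarith
  by_contra! h
  set N := ‖y - m‖ ^ 2
  have hN : 0 ≤ N := by positivity
  set q := ⟪s, m⟫ + ‖m - c‖ ^ 2 + N - (⟪s, y⟫ + ‖y - c‖ ^ 2) with hq
  have hqp : 0 < q := by linarith
  have := key (q / (2 * (N + q))) (by positivity) (by rw [div_lt_one (by positivity)]; linarith)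
  have h6 : q / (2 * (N + q)) * N ≤ q / 2 := by
    rw [div_mul_eq_mul_div, div_le_div_iff₀ (by positivity) (by positivity)]; nlinarith
  linarith

/-- one Frank-Wolfe step -/
lemma ocg_fw {E : Type*} [NormedAddCommGroup E] [InnerProductSpace ℝ E]
    (s c x v m : E) (l D : ℝ) (h0 : 0 ≤ l)
    (hv : ⟪s + (2:ℝ) • (x - c), v⟫ ≤ ⟪s + (2:ℝ) • (x - c), m⟫) (hD : ‖v - x‖ ≤ D) :
    ⟪s, (1 - l) • x + l • v⟫ + ‖(1 - l) • x + l • v - c‖ ^ 2 - (⟪s, m⟫ + ‖m - c‖ ^ 2) ≤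
      (1 - l) * (⟪s, x⟫ + ‖x - c‖ ^ 2 - (⟪s, m⟫ + ‖m - c‖ ^ 2)) + l ^ 2 * D ^ 2 := by
  have e1 : (1 - l) • x + l • v - c = (x - c) + l • (v - x) := by module
  have e5 : m - c = (x - c) + (m - x) := by abel
  have e2 : ⟪s, m⟫ = ⟪s, x⟫ + ⟪s, m - x⟫ := by rw [← inner_add_right]; simp
  have e4 : ⟪s, (1 - l) • x + l • v⟫ = ⟪s, x⟫ + l * ⟪s, v - x⟫ := by
    rw [← real_inner_smul_right, ← inner_add_right]; congr 1; module
  have h1 : ⟪s, v - x⟫ + 2 * ⟪x - c, v - x⟫ ≤ ⟪s, m - x⟫ + 2 * ⟪x - c, m - x⟫ := by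
    simp only [inner_add_left, real_inner_smul_left, inner_sub_right] at hv ⊢
    linarith
  have h2 : ‖v - x‖ ^ 2 ≤ D ^ 2 := by gcongr
  rw [e1, e4, e2, e5, norm_add_sq_real, norm_add_sq_real, norm_smul, mul_pow, inner_smul_right]
  simp only [Real.norm_eq_abs, sq_abs]
  have h3 := mul_le_mul_of_nonneg_left h1 h0
  have h4 := mul_le_mul_of_nonneg_left h2 (sq_nonneg l)
  have h5 : 0 ≤ l * ‖m - x‖ ^ 2 := by positivity
  linarith

lemma ocg_scalar {A e B b : ℝ} (hA : 0 ≤ A) (hB : 0 < B) (h : A + e * B ≤ B ^ 2)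
    (hb : b ^ 2 ≤ A + e * b) : b ≤ B := by
  by_contra! hlt
  have h1 : e ≤ B := by
    by_contra! h'
    nlinarith
  nlinarith

lemma ocg_sig (t : ℕ) (ht : 1 ≤ t) :
    2 * min 1 (2 / √(t:ℝ)) - (min 1 (2 / √(t:ℝ))) ^ 2 + 1 / ((t:ℝ) + 1) ≤
      2 * min 1 (2 / √((t:ℝ) + 1)) := by
  have ht' : (1:ℝ) ≤ t := by exact_mod_cast ht
  have hs : 0 < √(t:ℝ) := Real.sqrt_pos.2 (by linarith)
  have hr : 0 < √((t:ℝ) + 1) := Real.sqrt_pos.2 (by linarith)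
  have hs2 := Real.sq_sqrt (by linarith : (0:ℝ) ≤ t)
  have hr2 := Real.sq_sqrt (by linarith : (0:ℝ) ≤ (t:ℝ) + 1)
  rcases le_or_gt 4 t with h | h
  · have h4 : (4:ℝ) ≤ t := by exact_mod_cast h
    have a1 : 2 ≤ √(t:ℝ) := by apply Real.le_sqrt_of_sq_le; linarith
    have a2 : √(t:ℝ) ≤ √((t:ℝ) + 1) := Real.sqrt_le_sqrt (by linarith)
    rw [min_eq_right ((div_le_one hs).2 a1), min_eq_right ((div_le_one hr).2 (a1.trans a2))]
    have hr3 : 1 / ((t:ℝ) + 1) = 1 / √((t:ℝ) + 1) ^ 2 := by rw [hr2]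
    rw [hr3]
    set s := √(t:ℝ)
    set r := √((t:ℝ) + 1)
    have hrs : r ^ 2 = s ^ 2 + 1 := by rw [hr2, hs2]
    have k1 : 1 / s - 1 / r ≤ 1 / (2 * s ^ 2) * (1 / s) := by
      have : r - s ≤ 1 / (2 * s) := by
        rw [le_div_iff₀ (by positivity)]; nlinarith
      have e : 1 / s - 1 / r = (r - s) * (1 / (s * r)) := by field_simp
      rw [e]
      calc (r - s) * (1 / (s * r)) ≤ 1 / (2 * s) * (1 / (s * s)) := by
            apply mul_le_mul this _ (by positivity) (by positivity)
            gcongr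
        _ = _ := by field_simp
    have k2 : 1 / s ≤ 1 / 2 := by gcongr
    have k3 : 1 / r ^ 2 ≤ 1 / s ^ 2 := by gcongr
    have k4 : 1 / (2 * s ^ 2) * (1 / s) ≤ 1 / (2 * s ^ 2) * (1 / 2) := by gcongr
    have k5 : 1 / (2 * s ^ 2) = (1 / s ^ 2) / 2 := by field_simp
    have k6 : (2 / s) ^ 2 = 4 * (1 / s ^ 2) := by field_simp; norm_num
    have k7 : 2 / s = 2 * (1 / s) := by ring
    have k8 : 2 / r = 2 * (1 / r) := by ring
    have k9 : 0 < 1 / s ^ 2 := by positivity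
    rw [k6, k7, k8]
    rw [k5] at k1 k4
    linarith
  · have h4 : (t:ℝ) + 1 ≤ 4 := by
      have : t + 1 ≤ 4 := h
      exact_mod_cast this
    have a2 : √((t:ℝ) + 1) ≤ 2 := Real.sqrt_le_iff.2 ⟨by norm_num, by linarith⟩
    have a1 : √(t:ℝ) ≤ 2 := Real.sqrt_le_iff.2 ⟨by norm_num, by linarith⟩
    rw [min_eq_left ((one_le_div hs).2 a1), min_eq_left ((one_le_div hr).2 a2)]
    have : 1 / ((t:ℝ) + 1) ≤ 1 := by rw [div_le_one (by linarith)]; linarith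
    linarith

/-- `w = t^(1/4)` -/
lemma ocg_quarter (n : ℕ) :
    ∑ t ∈ Finset.Icc 1 n, 1 / (t:ℝ) ^ ((1:ℝ) / 4) ≤ 2 * (n:ℝ) ^ ((3:ℝ) / 4) := by
  induction n with
  | zero => simp
  | succ n ih =>
    rw [Finset.sum_Icc_succ_top (by omega)]
    have p (m : ℕ) : (m:ℝ) ^ ((3:ℝ) / 4) = ((m:ℝ) ^ ((1:ℝ) / 4)) ^ 3 := by
      rw [← Real.rpow_mul_natCast (by positivity)]; norm_num
    have q (m : ℕ) : ((m:ℝ) ^ ((1:ℝ) / 4)) ^ 4 = m := by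
      rw [← Real.rpow_mul_natCast (by positivity)]; norm_num
    rw [p] at ih ⊢
    have ha : 0 < ((n+1:ℕ):ℝ) ^ ((1:ℝ) / 4) := by positivity
    have hb : 0 ≤ (n:ℝ) ^ ((1:ℝ) / 4) := by positivity
    have hab : (n:ℝ) ^ ((1:ℝ) / 4) ≤ ((n+1:ℕ):ℝ) ^ ((1:ℝ) / 4) := by gcongr; omega
    have q1 := q n
    have q2 := q (n+1)
    push_cast at q2 ih ha hab ⊢
    set a := ((n:ℝ) + 1) ^ ((1:ℝ) / 4)
    set b := (n:ℝ) ^ ((1:ℝ) / 4)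
    have : 1 / a ≤ 2 * a ^ 3 - 2 * b ^ 3 := by
      rw [div_le_iff₀ ha]
      have h1 : (1:ℝ) = (a - b) * ((a + b) * (a ^ 2 + b ^ 2)) := by
        have : a ^ 4 - b ^ 4 = 1 := by rw [q1, q2]; ring
        rw [← this]; ring
      have h2 : (2 * a ^ 3 - 2 * b ^ 3) * a = (a - b) * (2 * a * (a ^ 2 + a * b + b ^ 2)) := by ring
      rw [h2]
      refine h1.le.trans (mul_le_mul_of_nonneg_left ?_ (sub_nonneg.2 hab))
      have : 0 ≤ a * b * (a + b) := by positivity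
      have h5 : b ^ 2 * b ≤ b ^ 2 * a := by gcongr
      nlinarith [pow_pos ha 3, mul_nonneg ha.le (sq_nonneg b)]
    linarith

lemma ocg_sqrt (n : ℕ) (hn : 1 ≤ n) :
    √(2 * min 1 (2 / √(n:ℝ))) ≤ 2 * (1 / (n:ℝ) ^ ((1:ℝ) / 4)) := by
  have hn' : (0:ℝ) < n := by exact_mod_cast hn
  refine Real.sqrt_le_iff.2 ⟨by positivity, ?_⟩
  have : √(n:ℝ) = ((n:ℝ) ^ ((1:ℝ) / 4)) ^ 2 := by
    rw [← Real.rpow_mul_natCast (by positivity), Real.sqrt_eq_rpow]; norm_num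
  rw [this, mul_pow, div_pow, one_pow]
  have := min_le_right 1 (2 / ((n:ℝ) ^ ((1:ℝ) / 4)) ^ 2)
  have e : 2 / ((n:ℝ) ^ ((1:ℝ) / 4)) ^ 2 = 2 * (1 / ((n:ℝ) ^ ((1:ℝ) / 4)) ^ 2) := by ring
  rw [e] at this ⊢
  linarith

/-- **Regret of the online conditional gradient algorithm** with parameters
`η = D/(2G·T^{3/4})` and `σ_t = min{1, 2/√t}`:
`Σ_t f_t(x_t) − min_{x ∈ K} Σ_t f_t(x) ≤ 8·D·G·T^{3/4}`.  Here
`∇F_t(x_t) = η·Σ_{τ=1}^{t−1} ∇f_τ(x_τ) + 2(x_t − x_1)`. -/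
theorem online_conditional_gradient_regret
    {d : ℕ} (K : Set (EuclideanSpace ℝ (Fin d)))
    (hKcomp : IsCompact K) (hKconv : Convex ℝ K)
    (D G : ℝ) (hD : 0 < D) (hG : 0 < G)
    (hdiam : ∀ x ∈ K, ∀ y ∈ K, ‖x - y‖ ≤ D)
    (T : ℕ) (hT : 1 ≤ T)
    (f : ℕ → EuclideanSpace ℝ (Fin d) → ℝ)
    (hconv : ∀ t ∈ Finset.Icc 1 T, ConvexOn ℝ K (f t))
    (gf : ℕ → EuclideanSpace ℝ (Fin d) → EuclideanSpace ℝ (Fin d))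
    (hgf : ∀ t ∈ Finset.Icc 1 T, ∀ z ∈ K, HasGradientAt (f t) (gf t z) z)
    (hGb : ∀ t ∈ Finset.Icc 1 T, ∀ z ∈ K, ‖gf t z‖ ≤ G)
    (η : ℝ) (hη : η = D / (2 * G * (T : ℝ) ^ ((3 : ℝ) / 4)))
    (σ : ℕ → ℝ) (hσ : ∀ t : ℕ, σ t = min 1 (2 / Real.sqrt t))
    (x v : ℕ → EuclideanSpace ℝ (Fin d)) (hx1 : x 1 ∈ K)
    (hv : ∀ t ∈ Finset.Icc 1 T, v t ∈ K ∧ ∀ z ∈ K,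
      ⟪η • (∑ τ ∈ Finset.Icc 1 (t - 1), gf τ (x τ)) + (2 : ℝ) • (x t - x 1), v t⟫ ≤
        ⟪η • (∑ τ ∈ Finset.Icc 1 (t - 1), gf τ (x τ)) + (2 : ℝ) • (x t - x 1), z⟫)
    (hrec : ∀ t ∈ Finset.Icc 1 T, x (t + 1) = (1 - σ t) • x t + σ t • v t) :
    ∀ z ∈ K,
      ∑ t ∈ Finset.Icc 1 T, f t (x t) - ∑ t ∈ Finset.Icc 1 T, f t z ≤
        8 * D * G * (T : ℝ) ^ ((3 : ℝ) / 4) := by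
  intro z hz
  have hTr : (1:ℝ) ≤ T := by exact_mod_cast hT
  set P := (T : ℝ) ^ ((3 : ℝ) / 4) with hP
  have hPpos : 0 < P := by positivity
  have hηpos : 0 < η := by rw [hη]; positivity
  have hηGP : η * G * P = D / 2 := by rw [hη]; field_simp
  set g : ℕ → EuclideanSpace ℝ (Fin d) := fun t => gf t (x t) with hg
  set c := x 1 with hc
  set s : ℕ → EuclideanSpace ℝ (Fin d) := fun t => η • ∑ τ ∈ Finset.Icc 1 (t - 1), g τ with hs
  have hsucc : ∀ t, 1 ≤ t → s (t + 1) = s t + η • g t := by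
    intro t ht
    obtain ⟨n, rfl⟩ : ∃ n, t = n + 1 := ⟨t - 1, by omega⟩
    simp only [hs, Nat.add_sub_cancel]
    rw [Finset.sum_Icc_succ_top (by omega), smul_add]
  have hs1 : s 1 = 0 := by simp [hs]
  have hσ0 : ∀ t, 0 ≤ σ t := fun t => by rw [hσ]; positivity
  have hσ1 : ∀ t, σ t ≤ 1 := fun t => by rw [hσ]; exact min_le_left _ _
  have hxK : ∀ t, 1 ≤ t → t ≤ T + 1 → x t ∈ K := by
    intro t ht
    induction t, ht using Nat.le_induction with
    | base => intro _; exact hx1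
    | succ t ht ih =>
      intro h
      have hm : t ∈ Finset.Icc 1 T := Finset.mem_Icc.2 ⟨ht, by omega⟩
      rw [hrec t hm]
      exact hKconv (ih (by omega)) (hv t hm).1 (by linarith [hσ1 t]) (hσ0 t) (by ring)
  have hex : ∀ t, ∃ m ∈ K, ∀ y ∈ K, ⟪s t, m⟫ + ‖m - c‖ ^ 2 ≤ ⟪s t, y⟫ + ‖y - c‖ ^ 2 := by
    intro t
    have hcont : Continuous (fun y : EuclideanSpace ℝ (Fin d) => ⟪s t, y⟫ + ‖y - c‖ ^ 2) := by
      fun_prop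
    obtain ⟨m, hm, hmin⟩ := hKcomp.exists_isMinOn ⟨c, hx1⟩ hcont.continuousOn
    exact ⟨m, hm, fun y hy => hmin hy⟩
  choose m hmK hmin using hex
  have hgb : ∀ t, 1 ≤ t → t ≤ T → ‖g t‖ ≤ G := fun t h1 h2 =>
    hGb t (Finset.mem_Icc.2 ⟨h1, h2⟩) _ (hxK t h1 (by omega))
  set h : ℕ → ℝ := fun t => ⟪s t, x t⟫ + ‖x t - c‖ ^ 2 - (⟪s t, m t⟫ + ‖m t - c‖ ^ 2) with hh
  have hst : ∀ t, 1 ≤ t → t ≤ T + 1 → ‖x t - m t‖ ^ 2 ≤ h t := by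
    intro t h1 h2
    have := ocg_strong hKconv (s t) c (hmK t) (hxK t h1 h2) (hmin t)
    simp only [hh]; linarith
  have hdist : ∀ t, 1 ≤ t → t ≤ T + 1 → ‖x t - m t‖ ≤ √(h t) := fun t h1 h2 =>
    Real.le_sqrt_of_sq_le (hst t h1 h2)
  have hbound : ∀ t, 1 ≤ t → t ≤ T → √(h t) ≤ D * √(2 * σ t) := by
    intro t ht
    induction t, ht using Nat.le_induction with
    | base =>
      intro _
      have : h 1 ≤ 0 := by
        simp only [hh, hs1, inner_zero_left, ← hc, sub_self, norm_zero]
        have : 0 ≤ ‖m 1 - c‖ ^ 2 := by positivity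
        linarith
      rw [Real.sqrt_eq_zero_of_nonpos this]
      positivity
    | succ t ht ih =>
      intro hle
      have ih := ih (by omega)
      have hmem : t ∈ Finset.Icc 1 T := Finset.mem_Icc.2 ⟨ht, by omega⟩
      have hht0 : 0 ≤ h t := (sq_nonneg _).trans (hst t ht (by omega))
      have hht1 : 0 ≤ h (t + 1) := (sq_nonneg _).trans (hst (t + 1) (by omega) (by omega))
      have ih2 : h t ≤ 2 * σ t * D ^ 2 := by
        have := pow_le_pow_left₀ (Real.sqrt_nonneg _) ih 2
        rw [Real.sq_sqrt hht0, mul_pow, Real.sq_sqrt (by linarith [hσ0 t])] at this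
        linarith
      have fw := ocg_fw (s t) c (x t) (v t) (m t) (σ t) D (hσ0 t)
        ((hv t hmem).2 (m t) (hmK t)) (hdiam _ (hv t hmem).1 _ (hxK t ht (by omega)))
      rw [← hrec t hmem] at fw
      have hstep : h (t + 1) ≤ (1 - σ t) * h t + σ t ^ 2 * D ^ 2 + η * G * √(h (t + 1)) := by
        have a1 := hmin t (m (t + 1)) (hmK _)
        have a2 : ⟪g t, x (t + 1) - m (t + 1)⟫ ≤ G * √(h (t + 1)) :=
          (real_inner_le_norm _ _).trans (mul_le_mul (hgb t ht (by omega))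
            (hdist (t + 1) (by omega) (by omega)) (norm_nonneg _) hG.le)
        have a3 := mul_le_mul_of_nonneg_left a2 hηpos.le
        rw [inner_sub_right] at a3
        have a4 : h (t + 1) = ⟪s t, x (t + 1)⟫ + η * ⟪g t, x (t + 1)⟫ + ‖x (t + 1) - c‖ ^ 2 -
            (⟪s t, m (t + 1)⟫ + η * ⟪g t, m (t + 1)⟫ + ‖m (t + 1) - c‖ ^ 2) := by
          simp only [hh]
          rw [hsucc t ht, inner_add_left, inner_add_left, real_inner_smul_left (g t),
            real_inner_smul_left (g t)]
        have a5 : (1 - σ t) * h t = (1 - σ t) *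
          (⟪s t, x t⟫ + ‖x t - c‖ ^ 2 - (⟪s t, m t⟫ + ‖m t - c‖ ^ 2)) := rfl
        rw [a5]
        linarith
      have hσpos : 0 < σ (t + 1) := by
        rw [hσ]; apply lt_min one_pos; positivity
      have hA : 0 ≤ (2 * σ t - σ t ^ 2) * D ^ 2 := by
        have : 0 ≤ σ t * (2 - σ t) := mul_nonneg (hσ0 t) (by linarith [hσ1 t])
        exact mul_nonneg (by linarith) (sq_nonneg D)
      refine ocg_scalar (A := (2 * σ t - σ t ^ 2) * D ^ 2) (e := η * G) hA (by positivity) ?_ ?_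
      · have b1 := ocg_sqrt (t + 1) (by omega)
        rw [← hσ] at b1
        have b2 := ocg_sig t ht
        have b3 := hσ (t + 1)
        push_cast at b3
        rw [← hσ, ← b3] at b2
        rw [mul_pow, Real.sq_sqrt (by linarith)]
        have w4 : (((t+1:ℕ):ℝ) ^ ((1:ℝ) / 4)) ^ 4 = (t:ℝ) + 1 := by
          rw [← Real.rpow_mul_natCast (by positivity)]; norm_num
        have w3 : (((t+1:ℕ):ℝ) ^ ((1:ℝ) / 4)) ^ 3 ≤ P := by
          rw [← Real.rpow_mul_natCast (by positivity), hP]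
          norm_num only
          gcongr
        have wpos : 0 < ((t+1:ℕ):ℝ) ^ ((1:ℝ) / 4) := by positivity
        set w := ((t+1:ℕ):ℝ) ^ ((1:ℝ) / 4)
        have b4 : η * G * (D * √(2 * σ (t + 1))) ≤ D ^ 2 * (1 / ((t:ℝ) + 1)) := by
          calc η * G * (D * √(2 * σ (t + 1))) ≤ η * G * (D * (2 * (1 / w))) := by gcongr
            _ = (η * G * w ^ 3) * (2 * D * (1 / w ^ 4)) := by field_simp
            _ ≤ (η * G * P) * (2 * D * (1 / w ^ 4)) := by gcongr
            _ = _ := by rw [hηGP, w4]; ring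
        have b5 := mul_le_mul_of_nonneg_left b2 (sq_nonneg D)
        linarith
      · rw [Real.sq_sqrt hht1]
        have := mul_le_mul_of_nonneg_left ih2 (by linarith [hσ1 t] : 0 ≤ 1 - σ t)
        linarith
  have hpot : ∀ n, n ≤ T → ∑ t ∈ Finset.Icc 1 n, (η * ⟪g t, x t⟫ -
      η * G * (2 * D * (1 / (t:ℝ) ^ ((1:ℝ) / 4))) - (η * G) ^ 2 / 4) ≤
      ⟪s (n + 1), m (n + 1)⟫ + ‖m (n + 1) - c‖ ^ 2 := by
    intro n
    induction n with
    | zero =>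
      intro _
      simp only [Nat.zero_add, hs1, inner_zero_left, zero_add]
      simp
    | succ n ih =>
      intro hn
      have ih := ih (by omega)
      rw [Finset.sum_Icc_succ_top (by omega)]
      set t := n + 1 with ht
      have ht1 : 1 ≤ t := by omega
      rw [hsucc t ht1, inner_add_left, real_inner_smul_left (g t)]
      have c1 := ocg_strong hKconv (s t) c (hmK t) (hmK (t + 1)) (hmin t)
      have c2 : ⟪g t, m t - m (t + 1)⟫ ≤ G * ‖m (t + 1) - m t‖ := by
        rw [norm_sub_rev]
        exact (real_inner_le_norm _ _).trans (by gcongr; exact hgb t ht1 hn)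
      have c3 : ⟪g t, x t - m t⟫ ≤ G * (2 * D * (1 / (t:ℝ) ^ ((1:ℝ) / 4))) := by
        refine (real_inner_le_norm _ _).trans (mul_le_mul (hgb t ht1 hn) ?_ (norm_nonneg _) hG.le)
        refine (hdist t ht1 (by omega)).trans ((hbound t ht1 hn).trans ?_)
        have := ocg_sqrt t ht1
        rw [← hσ] at this
        have := mul_le_mul_of_nonneg_left this hD.le
        linarith
      have c4 := mul_le_mul_of_nonneg_left c2 hηpos.le
      have c5 := mul_le_mul_of_nonneg_left c3 hηpos.le
      rw [inner_sub_right] at c4 c5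
      have c6 := sq_nonneg (‖m (t + 1) - m t‖ - η * G / 2)
      linarith
  have hfin := (hpot T le_rfl).trans (hmin (T + 1) z hz)
  have hsz : ⟪s (T + 1), z⟫ = η * ∑ t ∈ Finset.Icc 1 T, ⟪g t, z⟫ := by
    simp only [hs, Nat.add_sub_cancel]
    rw [real_inner_smul_left, sum_inner]
  have hzD : ‖z - c‖ ^ 2 ≤ D ^ 2 := by
    have := hdiam z hz c hx1
    gcongr
  rw [hsz] at hfin
  simp only [Finset.sum_sub_distrib, ← Finset.mul_sum, Finset.sum_const, Nat.card_Icc,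
    Nat.add_sub_cancel, nsmul_eq_mul] at hfin
  have hq := ocg_quarter T
  rw [← hP] at hq
  have hreg : ∑ t ∈ Finset.Icc 1 T, f t (x t) - ∑ t ∈ Finset.Icc 1 T, f t z ≤
      ∑ t ∈ Finset.Icc 1 T, ⟪g t, x t⟫ - ∑ t ∈ Finset.Icc 1 T, ⟪g t, z⟫ := by
    rw [← Finset.sum_sub_distrib, ← Finset.sum_sub_distrib]
    apply Finset.sum_le_sum
    intro t ht
    have ht' := Finset.mem_Icc.1 ht
    have hxt := hxK t ht'.1 (by omega)
    rw [← inner_sub_right]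
    exact ocg_grad (hconv t ht) hxt hz (hgf t ht _ hxt)
  refine hreg.trans ?_
  have hTP : (T:ℝ) ≤ P ^ 2 := by
    rw [hP, ← Real.rpow_mul_natCast (by positivity)]
    calc (T:ℝ) = (T:ℝ) ^ (1:ℝ) := by simp
      _ ≤ _ := Real.rpow_le_rpow_of_exponent_le hTr (by norm_num)
  have d1 : (T:ℝ) * ((η * G) ^ 2 / 4) ≤ D ^ 2 / 16 := by
    calc (T:ℝ) * ((η * G) ^ 2 / 4) ≤ P ^ 2 * ((η * G) ^ 2 / 4) := by gcongr
      _ = (η * G * P) ^ 2 / 4 := by ring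
      _ = _ := by rw [hηGP]; ring
  have d2 : η * G * (2 * D * ∑ t ∈ Finset.Icc 1 T, 1 / (t:ℝ) ^ ((1:ℝ) / 4)) ≤ 2 * D ^ 2 := by
    calc _ ≤ η * G * (2 * D * (2 * P)) := by gcongr
      _ = (η * G * P) * (4 * D) := by ring
      _ = _ := by rw [hηGP]; ring
  have d3 : η * (8 * D * G * P) = 4 * D ^ 2 := by
    calc _ = (η * G * P) * (8 * D) := by ring
      _ = _ := by rw [hηGP]; ring
  refine le_of_mul_le_mul_left ?_ hηpos
  rw [d3, mul_sub]
  have : 0 < D ^ 2 := by positivity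
  linarith
end

section
/- (von Neumann minimax theorem for zero-sum games) Let A ∈ [0,1]^{n×m} be the loss matrix of a two-player zero-sum game. Then min_{x ∈ Δ_n} max_{y ∈ Δ_m} xᵀAy = max_{y ∈ Δ_m} min_{x ∈ Δ_n} xᵀAy, where Δ_n = {x ∈ ℝ^n : x_i ≥ 0, Σ_i x_i = 1} and Δ_m = {y ∈ ℝ^m : y_j ≥ 0, Σ_j y_j = 1} are the probability simplices (the minima and maxima are attained by compactness and continuity). -/
/-- **von Neumann's minimax theorem for zero-sum games.** For a loss matrix
`A ∈ [0,1]^{n×m}`, `min_{x ∈ Δ_n} max_{y ∈ Δ_m} xᵀAy = max_{y ∈ Δ_m} min_{x ∈ Δ_n} xᵀAy`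
(the inner optima over the compact simplices are expressed via `sSup`/`sInf` of the
corresponding image sets; all of them are attained by compactness and continuity). -/
theorem von_neumann_minimax
    {n m : ℕ} (hn : 0 < n) (hm : 0 < m)
    (A : Matrix (Fin n) (Fin m) ℝ) (hA : ∀ i j, A i j ∈ Set.Icc (0 : ℝ) 1) :
    sInf ((fun x : Fin n → ℝ =>
        sSup ((fun y : Fin m → ℝ => ∑ i, ∑ j, x i * A i j * y j) ''
          stdSimplex ℝ (Fin m))) '' stdSimplex ℝ (Fin n)) =
      sSup ((fun y : Fin m → ℝ =>
        sInf ((fun x : Fin n → ℝ => ∑ i, ∑ j, x i * A i j * y j) ''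
          stdSimplex ℝ (Fin n))) '' stdSimplex ℝ (Fin m)) := by
  classical
  set f : (Fin n → ℝ) → (Fin m → ℝ) → ℝ := fun x y => ∑ i, ∑ j, x i * A i j * y j with hf
  have neX : (stdSimplex ℝ (Fin n)).Nonempty := ⟨_, single_mem_stdSimplex ℝ (⟨0, hn⟩ : Fin n)⟩
  have neY : (stdSimplex ℝ (Fin m)).Nonempty := ⟨_, single_mem_stdSimplex ℝ (⟨0, hm⟩ : Fin m)⟩
  have cX := convex_stdSimplex ℝ (Fin n)
  have cY := convex_stdSimplex ℝ (Fin m)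
  have kX := isCompact_stdSimplex ℝ (Fin n)
  have kY := isCompact_stdSimplex ℝ (Fin m)
  have c1 : ∀ y, Continuous (fun x => f x y) := fun y => by simp only [hf]; fun_prop
  have c2 : ∀ x, Continuous (fun y => f x y) := fun x => by simp only [hf]; fun_prop
  obtain ⟨a, ha, b, hb, hs⟩ := Sion.exists_isSaddlePointOn (f := f) neX cX kX
    (fun y _ => (c1 y).continuousOn.lowerSemicontinuousOn)
    (fun y _ => ConvexOn.quasiconvexOn ⟨cX, fun u _ v _ s t _ _ _ => le_of_eq (by
      simp only [hf, Pi.add_apply, Pi.smul_apply, smul_eq_mul, Finset.mul_sum,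
        ← Finset.sum_add_distrib]
      refine Finset.sum_congr rfl fun i _ => Finset.sum_congr rfl fun j _ => ?_
      ring)⟩) cY neY kY
    (fun x _ => (c2 x).continuousOn.upperSemicontinuousOn)
    (fun x _ => ConcaveOn.quasiconcaveOn ⟨cY, fun u _ v _ s t _ _ _ => le_of_eq (by
      simp only [hf, Pi.add_apply, Pi.smul_apply, smul_eq_mul, Finset.mul_sum,
        ← Finset.sum_add_distrib]
      refine Finset.sum_congr rfl fun i _ => Finset.sum_congr rfl fun j _ => ?_
      ring)⟩)
  have bA : ∀ x, BddAbove ((fun y => f x y) '' stdSimplex ℝ (Fin m)) :=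
    fun x => kY.bddAbove_image (c2 x).continuousOn
  have bB : ∀ y, BddBelow ((fun x => f x y) '' stdSimplex ℝ (Fin n)) :=
    fun y => kX.bddBelow_image (c1 y).continuousOn
  have e1 : sSup ((fun y => f a y) '' stdSimplex ℝ (Fin m)) = f a b :=
    IsGreatest.csSup_eq ⟨⟨b, hb, rfl⟩, by rintro _ ⟨y, hy, rfl⟩; exact hs a ha y hy⟩
  have e2 : sInf ((fun x => f x b) '' stdSimplex ℝ (Fin n)) = f a b :=
    IsLeast.csInf_eq ⟨⟨a, ha, rfl⟩, by rintro _ ⟨x, hx, rfl⟩; exact hs x hx b hb⟩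
  trans f a b
  · apply IsLeast.csInf_eq
    refine ⟨⟨a, ha, e1⟩, ?_⟩
    rintro _ ⟨x, hx, rfl⟩
    exact (hs x hx b hb).trans (le_csSup (bA x) ⟨b, hb, rfl⟩)
  · symm
    apply IsGreatest.csSup_eq
    refine ⟨⟨b, hb, e2⟩, ?_⟩
    rintro _ ⟨y, hy, rfl⟩
    exact (csInf_le (bB y) ⟨a, ha, rfl⟩).trans (hs a ha y hy)
end

section
/- (No Free Lunch) Let X be a finite domain with |X| = 2m > 4, and let A be any learning algorithm, i.e., any function mapping each labeled sample S ∈ (X × {0,1})^m to a hypothesis A(S) : X → {0,1}. Then there exists a concept C : X → {0,1} such that, with D_C the distribution on X × {0,1} obtained by drawing x uniformly from X and labeling it y = C(x): (1) the generalization error of C under D_C is zero; and (2) with probability at least 1/10 over a sample S of m i.i.d. draws from D_C, the generalization error of A(S) is at least 1/10, i.e., Pr_{S ~ D_C^m}[ error_{D_C}(A(S)) ≥ 1/10 ] ≥ 1/10. -/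
open Classical in
lemma nfl_half {X : Type*} [Fintype X] (m : ℕ)
    (A : (Fin m → X × Bool) → X → Bool) (xs : Fin m → X) (x : X) (hx : ∀ k, xs k ≠ x) :
    2 * ∑ C : X → Bool, (if A (fun k => (xs k, C (xs k))) x ≠ C x then (1 : ℝ) else 0)
      = Fintype.card (X → Bool) := by
  let f : (X → Bool) → ℝ := fun C => if A (fun k => (xs k, C (xs k))) x ≠ C x then (1 : ℝ) else 0
  let s : (X → Bool) → (X → Bool) := fun C => Function.update C x (!C x)
  have hs : Function.Involutive s := by
    intro C
    simp [s]
  have h1 : ∑ C, f (s C) = ∑ C, f C := Equiv.sum_comp hs.toPerm f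
  have h2 : ∀ C, f C + f (s C) = 1 := by
    intro C
    have h3 : (fun k => (xs k, s C (xs k))) = (fun k => (xs k, C (xs k))) := by
      funext k
      simp [s, Function.update_of_ne (hx k)]
    have h4 : s C x = !C x := by simp [s]
    simp only [f, h3, h4]
    cases A (fun k => (xs k, C (xs k))) x <;> cases C x <;> simp
  have h5 : ∑ C, f C + ∑ C, f (s C) = Fintype.card (X → Bool) := by
    rw [← Finset.sum_add_distrib]
    simp [h2]
  change 2 * ∑ C, f C = _
  linarith

open Classical in
lemma nfl_sample {X : Type*} [Fintype X] (m : ℕ) (hcard : Fintype.card X = 2 * m)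
    (A : (Fin m → X × Bool) → X → Bool) (xs : Fin m → X) :
    (m : ℝ) / 2 * Fintype.card (X → Bool) ≤ ∑ C : X → Bool, ∑ x : X,
      (if A (fun k => (xs k, C (xs k))) x ≠ C x then (1 : ℝ) else 0) := by
  rw [Finset.sum_comm]
  let R : Finset X := Finset.univ.image xs
  have hR : R.card ≤ m := by
    simpa using (Finset.card_image_le : (Finset.univ.image xs).card ≤ _)
  have hRc : (m : ℝ) ≤ (Rᶜ).card := by
    have h := Finset.card_add_card_compl R
    rw [hcard] at h
    exact_mod_cast (by omega : m ≤ (Rᶜ).card)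
  have h1 : ∑ x ∈ Rᶜ, ∑ C : X → Bool,
      (if A (fun k => (xs k, C (xs k))) x ≠ C x then (1 : ℝ) else 0)
      = ∑ x ∈ Rᶜ, (Fintype.card (X → Bool) : ℝ) / 2 := by
    apply Finset.sum_congr rfl
    intro x hx
    have := nfl_half m A xs x (by
      intro k hk
      simp only [R, Finset.mem_compl, Finset.mem_image, Finset.mem_univ, true_and] at hx
      exact hx ⟨k, hk⟩)
    linarith
  calc (m : ℝ) / 2 * Fintype.card (X → Bool)
      ≤ (Rᶜ).card * ((Fintype.card (X → Bool) : ℝ) / 2) := by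
        have : (0 : ℝ) ≤ Fintype.card (X → Bool) := by positivity
        nlinarith
    _ = ∑ x ∈ Rᶜ, (Fintype.card (X → Bool) : ℝ) / 2 := by rw [Finset.sum_const, nsmul_eq_mul]
    _ ≤ _ := by
        rw [← h1]
        apply Finset.sum_le_sum_of_subset_of_nonneg (Finset.subset_univ _)
        intro x _ _
        exact Finset.sum_nonneg (fun C _ => by split_ifs <;> norm_num)

/-- **No Free Lunch theorem.** Let `X` be a finite domain with `|X| = 2m > 4` and let
`A` be any learning algorithm mapping labeled samples of size `m` to hypotheses
`X → {0,1}`. Then there is a concept `C : X → {0,1}` with zero generalization error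
(under the distribution drawing `x` uniformly from `X` labeled by `C`) such that,
with probability at least `1/10` over the i.i.d. uniform sample, the hypothesis
produced by `A` has generalization error at least `1/10`. Probabilities over the
finite uniform distributions are expressed as normalized counts. -/
theorem no_free_lunch
    {X : Type*} [Fintype X] (m : ℕ)
    (hcard : Fintype.card X = 2 * m) (hm : 4 < 2 * m)
    (A : (Fin m → X × Bool) → X → Bool) :
    ∃ C : X → Bool,
      ((Set.ncard {x : X | C x ≠ C x} : ℝ) / Fintype.card X = 0) ∧
      (1 : ℝ) / 10 ≤
        (Set.ncard {xs : Fin m → X |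
            (1 : ℝ) / 10 ≤
              (Set.ncard {x : X | A (fun k => (xs k, C (xs k))) x ≠ C x} : ℝ) /
                Fintype.card X} : ℝ) /
          Fintype.card (Fin m → X) := by
  classical
  let e : (X → Bool) → (Fin m → X) → ℝ := fun C xs =>
    ∑ x : X, (if A (fun k => (xs k, C (xs k))) x ≠ C x then (1 : ℝ) else 0)
  have he : ∀ C xs, (Set.ncard {x : X | A (fun k => (xs k, C (xs k))) x ≠ C x} : ℝ) = e C xs := by
    intro C xs
    simp only [e, Finset.sum_boole]
    rw [Set.ncard_eq_toFinset_card']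
    simp
  have hle : ∀ C xs, e C xs ≤ 2 * m := by
    intro C xs
    calc e C xs ≤ ∑ x : X, (1 : ℝ) :=
          Finset.sum_le_sum (fun x _ => by split_ifs <;> norm_num)
      _ = 2 * m := by simp [hcard]
  have hm0 : (0 : ℝ) < m := by exact_mod_cast (by omega : 0 < m)
  have hX : (Fintype.card X : ℝ) = 2 * m := by exact_mod_cast hcard
  have : Nonempty X := Fintype.card_pos_iff.mp (by omega)
  have hN : (0 : ℝ) < Fintype.card (Fin m → X) := by exact_mod_cast Fintype.card_pos
  obtain ⟨C, -, hC⟩ : ∃ C ∈ (Finset.univ : Finset (X → Bool)),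
      (m : ℝ) / 2 * Fintype.card (Fin m → X) ≤ ∑ xs, e C xs := by
    apply Finset.exists_le_of_sum_le Finset.univ_nonempty
    rw [Finset.sum_comm]
    calc ∑ C : X → Bool, (m : ℝ) / 2 * Fintype.card (Fin m → X)
        = ∑ xs : Fin m → X, (m : ℝ) / 2 * Fintype.card (X → Bool) := by
          simp only [Finset.sum_const, nsmul_eq_mul, Finset.card_univ]
          ring
      _ ≤ _ := Finset.sum_le_sum (fun xs _ => nfl_sample m hcard A xs)
  refine ⟨C, by simp, ?_⟩
  simp only [he, hX]
  rw [le_div_iff₀ hN]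
  have hB : (Set.ncard {xs : Fin m → X | (1 : ℝ) / 10 ≤ e C xs / (2 * m)} : ℝ)
      = ∑ xs : Fin m → X, (if (1 : ℝ) / 10 ≤ e C xs / (2 * m) then (1 : ℝ) else 0) := by
    rw [Finset.sum_boole, Set.ncard_eq_toFinset_card']
    simp
  rw [hB]
  have hsum : ∑ xs, e C xs ≤ ∑ xs : Fin m → X, ((m : ℝ) / 5 +
      2 * m * (if (1 : ℝ) / 10 ≤ e C xs / (2 * m) then (1 : ℝ) else 0)) := by
    apply Finset.sum_le_sum
    intro xs _
    split_ifs with h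
    · linarith [hle C xs]
    · rw [not_le, div_lt_iff₀ (by positivity)] at h
      linarith
  rw [Finset.sum_add_distrib, ← Finset.mul_sum, Finset.sum_const, nsmul_eq_mul,
    Finset.card_univ] at hsum
  have h := hC.trans hsum
  set B := ∑ xs : Fin m → X, (if (1 : ℝ) / 10 ≤ e C xs / (2 * m) then (1 : ℝ) else 0)
  have h2 : (m : ℝ) * ((3 / 10) * Fintype.card (Fin m → X)) ≤ m * (2 * B) := by linarith
  have h3 := le_of_mul_le_mul_left h2 hm0
  linarith
end
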